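/- arXiv:2310.05328 — 10 statements merged into one kernel-verified Lean document; each statement's English description precedes it below -/
import Mathlib

section
/- There exists an absolute constant C > 0 such that for every n ≥ 1, all real numbers y_1, …, y_n, and all integers 1 ≤ k < ℓ ≤ n, one has |s_ℓ(y)|^(1/ℓ) ≤ C · max( (ℓ/k)^(1/2) · |s_k(y)|^(1/k), (ℓ/(k+1))^(1/2) · |s_{k+1}(y)|^(1/(k+1)) ). -/
open Finset Real

/-- The non-normalized elementary symmetric function `S_m(y)`. -/
noncomputable def esymmS (n m : ℕ) (y : Fin n → ℝ) : ℝ :=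
  ∑ A ∈ powersetCard m (univ : Finset (Fin n)), ∏ i ∈ A, y i

/-- The elementary symmetric mean `s_m(y) = S_m(y) / binom(n,m)`. -/
noncomputable def smean (n m : ℕ) (y : Fin n → ℝ) : ℝ :=
  esymmS n m y / (n.choose m)


section PolyPart
open Polynomial

theorem mti_splits_derivative (p : ℝ[X]) (hp : p.Splits) : (derivative p).Splits := by
  rw [splits_iff_card_roots] at hp ⊢
  have h1 := card_roots_le_derivative p
  have h2 := (derivative p).card_roots'
  have h3 := natDegree_derivative_le p
  omega

theorem mti_splits_reverse (p : ℝ[X]) (hp : p.Splits) : (reverse p).Splits := by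
  induction hp using Submonoid.closure_induction with
  | mem x hx =>
    rcases hx with ⟨a, rfl⟩ | ⟨a, rfl⟩
    · simp
    · apply Splits.of_natDegree_le_one
      refine (reverse_natDegree_le _).trans ?_
      simp
  | one => 
    have : reverse (1 : ℝ[X]) = 1 := by
      have := reverse_C (1 : ℝ)
      simpa using this
    rw [this]; exact Splits.one
  | mul x y _ _ hx hy =>
    rw [reverse_mul_of_domain]
    exact hx.mul hy

theorem mti_splits_reflect (p : ℝ[X]) (hp : p.Splits) (N : ℕ) (hN : p.natDegree ≤ N) :
    (reflect N p).Splits := by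
  obtain ⟨G, rfl⟩ := Nat.exists_eq_add_of_le hN
  have h := reflect_mul p (1 : ℝ[X]) (F := p.natDegree) (G := G) le_rfl (by simp)
  rw [mul_one] at h
  rw [h]
  have h2 : reflect G (1 : ℝ[X]) = X ^ G := by
    have := reflect_C (1 : ℝ) G
    simpa using this
  rw [h2]
  exact (mti_splits_reverse p hp).mul (Splits.X_pow G)

/-- window polynomial -/
noncomputable def mtiW (f : ℕ → ℝ) (N : ℕ) : ℝ[X] :=
  ∑ i ∈ Finset.range (N + 1), monomial i ((N.choose i : ℝ) * f i)

theorem mtiW_coeff (f : ℕ → ℝ) (N i : ℕ) : (mtiW f N).coeff i = (N.choose i : ℝ) * f i := by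
  unfold mtiW
  rw [finsetSum_coeff]
  simp only [coeff_monomial]
  rw [Finset.sum_ite_eq']
  split_ifs with h
  · rfl
  · rw [Finset.mem_range] at h
    rw [Nat.choose_eq_zero_of_lt (by omega)]; simp

theorem mtiW_natDegree_le (f : ℕ → ℝ) (N : ℕ) : (mtiW f N).natDegree ≤ N := by
  rw [natDegree_le_iff_coeff_eq_zero]
  intro i hi
  rw [mtiW_coeff, Nat.choose_eq_zero_of_lt hi]; simp

theorem mtiW_derivative (f : ℕ → ℝ) (N : ℕ) :
    derivative (mtiW f (N+1)) = C ((N:ℝ)+1) * mtiW (fun i => f (i+1)) N := by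
  ext i
  rw [coeff_derivative, coeff_C_mul, mtiW_coeff, mtiW_coeff]
  have := Nat.add_one_mul_choose_eq N i
  have h : ((N:ℝ)+1) * (N.choose i) = ((N+1).choose (i+1)) * ((i:ℝ)+1) := by exact_mod_cast this
  linear_combination (-(f (i+1))) * h

theorem mtiW_reflect (f : ℕ → ℝ) (N : ℕ) :
    reflect N (mtiW f N) = mtiW (fun i => f (N - i)) N := by
  ext i
  rw [coeff_reflect, mtiW_coeff, mtiW_coeff]
  rcases le_or_gt i N with h | h
  · rw [revAt_le h, Nat.choose_symm h]
  · have : revAt N i = i := by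
      rw [← revAtFun_eq, revAtFun, if_neg (not_le.mpr h)]
    rw [this, Nat.choose_eq_zero_of_lt h]; simp

theorem mtiW_congr (f g : ℕ → ℝ) (N : ℕ) (h : ∀ i ≤ N, f i = g i) : mtiW f N = mtiW g N := by
  ext i
  rw [mtiW_coeff, mtiW_coeff]
  rcases le_or_gt i N with h' | h'
  · rw [h i h']
  · rw [Nat.choose_eq_zero_of_lt h']; simp

theorem mtiW_shift (f : ℕ → ℝ) (N : ℕ) (h : (mtiW f (N+1)).Splits) :
    (mtiW (fun i => f (i+1)) N).Splits := by
  have h1 := mti_splits_derivative _ h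
  rw [mtiW_derivative] at h1
  have h2 := h1.C_mul (((N:ℝ)+1)⁻¹)
  rw [← mul_assoc, ← C_mul, inv_mul_cancel₀ (by positivity)] at h2
  simpa using h2

theorem mtiW_refl_splits (f : ℕ → ℝ) (N : ℕ) (h : (mtiW f N).Splits) :
    (mtiW (fun i => f (N - i)) N).Splits := by
  rw [← mtiW_reflect]
  exact mti_splits_reflect _ h _ (mtiW_natDegree_le _ _)

theorem mtiW_trunc (f : ℕ → ℝ) (N : ℕ) (h : (mtiW f (N+1)).Splits) :
    (mtiW f N).Splits := by
  have h1 := mtiW_refl_splits _ _ (mtiW_shift _ _ (mtiW_refl_splits _ _ h))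
  rw [mtiW_congr f _ N]
  · exact h1
  · intro i hi
    show f i = f (N + 1 - (N - i + 1))
    congr 1; omega

theorem mtiW_window (f : ℕ → ℝ) (n : ℕ) (h : (mtiW f n).Splits) (j N : ℕ) (hjN : j + N ≤ n) :
    (mtiW (fun i => f (j + i)) N).Splits := by
  have h1 : ∀ d M, M + d = n → (mtiW f M).Splits := by
    intro d
    induction d with
    | zero => intro M hM; rw [← hM] at h; exact h
    | succ d ih => intro M hM; exact mtiW_trunc _ _ (ih (M+1) (by omega))
  have h2 : ∀ j M, M + j ≤ n → (mtiW (fun i => f (j + i)) M).Splits := by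
    intro j
    induction j with
    | zero => intro M hM; simpa using h1 (n - M) M (by omega)
    | succ j ih =>
      intro M hM
      have := mtiW_shift _ _ (ih (M+1) (by omega))
      convert this using 2
      funext i; congr 1; omega
  exact h2 j N (by omega)

theorem mtiW_base (n : ℕ) (y : Fin n → ℝ) : (mtiW (fun m => smean n m y) n).Splits := by
  have h : mtiW (fun m => smean n m y) n = ∏ i, (1 + C (y i) * X) := by
    rw [Finset.prod_one_add, Finset.sum_powerset]
    simp only [Finset.card_univ, Fintype.card_fin]
    unfold mtiW
    refine Finset.sum_congr rfl fun m hm => ?_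
    have hc : (n.choose m : ℝ) ≠ 0 := by
      have := Nat.choose_pos (n := n) (k := m) (by simpa [Nat.lt_succ_iff] using hm)
      positivity
    unfold smean
    rw [mul_div_cancel₀ _ hc]
    unfold esymmS
    rw [map_sum]
    refine Finset.sum_congr rfl fun A hA => ?_
    rw [Finset.prod_mul_distrib, Finset.prod_const, (Finset.mem_powersetCard.mp hA).2,
      ← C_mul_X_pow_eq_monomial, map_prod]
  rw [h]
  apply Splits.prod
  intro i _
  apply Splits.of_natDegree_le_one
  compute_degree

theorem mti_mahler (ρ g : ℝ) (hg : 0 < g) (s : Multiset ℝ) :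
    √(ρ^2+g^2)^(s.card) * ((s.map (fun a => |a|)).prod / g ^ s.card) ^ (g^2/(ρ^2+g^2)) ≤
      (s.map (fun a => √(ρ^2+a^2))).prod := by
  induction s using Multiset.induction with
  | empty => simp
  | cons a s ih =>
    simp only [Multiset.card_cons, Multiset.map_cons, Multiset.prod_cons]
    have hw : 0 < g^2/(ρ^2+g^2) := by positivity
    set w := g^2/(ρ^2+g^2) with hwdef
    have hw1 : w ≤ 1 := by
      rw [hwdef, div_le_one (by positivity)]; nlinarith [sq_nonneg ρ]
    have hP : 0 ≤ (s.map (fun a => |a|)).prod := by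
      apply Multiset.prod_nonneg
      intro x hx
      simp only [Multiset.mem_map] at hx
      obtain ⟨b, _, rfl⟩ := hx
      positivity
    have key : √(ρ^2+g^2) * (|a| / g) ^ w ≤ √(ρ^2+a^2) := by
      have h1 := Real.geom_mean_le_arith_mean2_weighted (w₁ := 1 - w) (w₂ := w) (p₁ := 1)
        (p₂ := (|a|/g)^2) (by linarith) hw.le zero_le_one (by positivity) (by ring)
      rw [Real.one_rpow, one_mul] at h1
      have h2 : (1 - w) * 1 + w * (|a|/g)^2 = (ρ^2+a^2)/(ρ^2+g^2) := by
        rw [hwdef, div_pow, sq_abs]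
        field_simp
        ring
      rw [h2] at h1
      apply Real.le_sqrt_of_sq_le
      rw [mul_pow, Real.sq_sqrt (by positivity)]
      have h3 : ((|a| / g) ^ w)^2 = ((|a|/g)^2)^w := by
        rw [← Real.rpow_natCast, ← Real.rpow_natCast, ← Real.rpow_mul (by positivity),
          ← Real.rpow_mul (by positivity), mul_comm]
      rw [h3]
      rw [le_div_iff₀ (by positivity)] at h1
      linarith
    have e : |a| * (s.map (fun a => |a|)).prod / g ^ (s.card + 1) =
       (|a| / g) * ((s.map (fun a => |a|)).prod / g ^ s.card) := by
      rw [pow_succ]; field_simp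
    rw [e, Real.mul_rpow (by positivity) (by positivity), pow_succ]
    calc _ = (√(ρ^2+g^2) * (|a| / g) ^ w) * (√(ρ^2+g^2)^(s.card) * ((s.map (fun a => |a|)).prod / g ^ s.card) ^ w) := by ring
      _ ≤ _ := by
        apply mul_le_mul key ih (by positivity) (by positivity)

theorem mti_window_ineq (f : ℕ → ℝ) (N : ℕ) (h : (mtiW f N).Splits) (g ρ : ℝ) (hg : 0 < g)
    (hρ : 0 ≤ ρ) (hN : f N ≠ 0) (h0 : |f 0| = |f N| * g ^ N) :
    |f N| * √(ρ^2+g^2)^N ≤ ∑ i ∈ Finset.range (N+1), (N.choose i : ℝ) * |f i| * ρ ^ i := by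
  have hdeg : (mtiW f N).natDegree = N := by
    apply le_antisymm (mtiW_natDegree_le _ _)
    apply le_natDegree_of_ne_zero
    rw [mtiW_coeff]; simpa using hN
  have hlead : (mtiW f N).leadingCoeff = f N := by
    rw [leadingCoeff, hdeg, mtiW_coeff]; simp
  have hcard : (mtiW f N).roots.card = N := by
    rw [← h.natDegree_eq_card_roots, hdeg]
  have hz := h.coeff_zero_eq_leadingCoeff_mul_prod_roots
  rw [mtiW_coeff, hlead, hdeg] at hz
  simp only [Nat.choose_zero_right, Nat.cast_one, one_mul] at hz
  have hprod : ((mtiW f N).roots.map (fun a => |a|)).prod = g ^ N := by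
    have h1 : |f 0| = |f N| * |(mtiW f N).roots.prod| := by
      rw [hz]; simp [abs_mul]
    have h2 : |(mtiW f N).roots.prod| = ((mtiW f N).roots.map (fun a => |a|)).prod := by
      exact map_multiset_prod (absHom : ℝ →*₀ ℝ) _
    rw [h0, h2] at h1
    exact (mul_left_cancel₀ (abs_ne_zero.mpr hN) h1).symm
  have hm := mti_mahler ρ g hg (mtiW f N).roots
  rw [hcard, hprod, div_self (by positivity), Real.one_rpow, mul_one] at hm
  have e1 : aeval (Complex.I * ρ) (mtiW f N) = (f N : ℂ) *
      ((mtiW f N).roots.map (fun a : ℝ => Complex.I * ρ - (a:ℂ))).prod := by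
    conv_lhs => rw [h.eq_prod_roots]
    rw [map_mul, hlead, map_multiset_prod, Multiset.map_map]
    simp
  have e2 : ‖aeval (Complex.I * ρ) (mtiW f N)‖ = |f N| *
      ((mtiW f N).roots.map (fun a => √(ρ^2+a^2))).prod := by
    rw [e1, norm_mul, Complex.norm_real, Real.norm_eq_abs]
    congr 1
    have := map_multiset_prod (normHom : ℂ →*₀ ℝ) ((mtiW f N).roots.map (fun a : ℝ => Complex.I * ρ - (a:ℂ)))
    rw [Multiset.map_map] at this
    refine Eq.trans this ?_
    congr 1
    apply Multiset.map_congr rfl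
    intro a _
    show ‖Complex.I * ρ - (a:ℂ)‖ = _
    rw [Complex.norm_eq_sqrt_sq_add_sq]
    simp [add_comm]
  have e3 : ‖aeval (Complex.I * ρ) (mtiW f N)‖ ≤
      ∑ i ∈ Finset.range (N+1), (N.choose i : ℝ) * |f i| * ρ ^ i := by
    unfold mtiW
    rw [map_sum]
    refine (norm_sum_le _ _).trans (Finset.sum_le_sum fun i _ => ?_)
    rw [aeval_monomial]
    simp [abs_of_nonneg hρ]
  rw [e2] at e3
  refine le_trans ?_ e3
  gcongr

end PolyPart

section AnalyticPart

/-- `x log x` -/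
noncomputable def mtiEta (x : ℝ) : ℝ := x * Real.log x

noncomputable def mtiL0 (p q : ℝ) : ℝ := (mtiEta (p + q) - mtiEta p - mtiEta q) / 2

noncomputable def mtiL (p q : ℝ) : ℝ := mtiL0 p q + 2800 * (p * q / (p + q))

theorem mti_choose_le (N i : ℕ) (hi : i ≤ N) :
    (N.choose i : ℝ) ≤ Real.exp (mtiEta N - mtiEta i - mtiEta (N - i)) := by
  rcases Nat.eq_zero_or_pos i with rfl | hi0
  · simp [mtiEta]
  rcases eq_or_lt_of_le hi with rfl | hlt
  · simp [mtiEta]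
  have hi0' : (0:ℝ) < i := by exact_mod_cast hi0
  have hlt' : (0:ℝ) < N - i := by
    have : (i:ℝ) < N := by exact_mod_cast hlt
    linarith
  have hN : (0:ℝ) < N := by linarith
  have h1 : ((i:ℝ)/N)^i * (((N:ℝ)-i)/N)^(N-i) * (N.choose i : ℝ) ≤ 1 := by
    have h := add_pow ((i:ℝ)/N) (((N:ℝ)-i)/N) N
    have e : (i:ℝ)/N + ((N:ℝ)-i)/N = 1 := by field_simp; ring
    rw [e, one_pow] at h
    rw [h]
    exact Finset.single_le_sum (f := fun m => ((i:ℝ)/N)^m * (((N:ℝ)-i)/N)^(N-m) * (N.choose m : ℝ))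
      (fun m _ => by positivity) (Finset.mem_range.mpr (by omega))
  have e1 : ((i:ℝ)/N)^i = Real.exp (i * (Real.log i - Real.log N)) := by
    rw [Real.exp_nat_mul, Real.exp_sub, Real.exp_log hi0', Real.exp_log hN]
  have e2 : (((N:ℝ)-i)/N)^(N-i) = Real.exp ((N-i) * (Real.log (N-i) - Real.log N)) := by
    have : ((N:ℝ) - i) = ((N - i : ℕ) : ℝ) := by push_cast [hi]; ring
    rw [this, Real.exp_nat_mul, Real.exp_sub, Real.exp_log (this ▸ hlt'), Real.exp_log hN]
  rw [e1, e2, ← Real.exp_add] at h1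
  have e3 : Real.exp (mtiEta N - mtiEta i - mtiEta (N - i)) =
    (Real.exp (i * (Real.log i - Real.log N) + (N-i) * (Real.log (N-i) - Real.log N)))⁻¹ := by
    rw [← Real.exp_neg]; congr 1; unfold mtiEta; ring
  rw [e3, le_inv_comm₀ (by have := Nat.choose_pos hi; positivity) (by positivity)]
  rw [← one_div, le_div_iff₀ (by have := Nat.choose_pos hi; positivity)]
  exact h1

/-- `x log (1 + c / x)` is increasing. -/
theorem mti_mono (x y c : ℝ) (hx : 0 < x) (hxy : x ≤ y) (hc : 0 ≤ c) :
    x * (Real.log (x + c) - Real.log x) ≤ y * (Real.log (y + c) - Real.log y) := by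
  have hy : 0 < y := by linarith
  rw [← Real.log_div (by positivity) (by positivity), ← Real.log_div (by positivity) (by positivity)]
  have h1 : 0 < (x+c)/x := by positivity
  have h := Real.geom_mean_le_arith_mean2_weighted (w₁ := 1 - x/y) (w₂ := x/y) (p₁ := 1)
        (p₂ := (x+c)/x) (by rw [sub_nonneg, div_le_one hy]; exact hxy) (by positivity) zero_le_one (by positivity) (by ring)
  rw [Real.one_rpow, one_mul] at h
  have e : (1 - x/y) * 1 + x/y * ((x+c)/x) = (y+c)/y := by field_simp; ring
  rw [e] at h
  have h2 := Real.log_le_log (by positivity) h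
  rw [Real.log_rpow h1] at h2
  have h3 := mul_le_mul_of_nonneg_left h2 hy.le
  have e2 : y * (x / y * Real.log ((x+c)/x)) = x * Real.log ((x+c)/x) := by field_simp
  rw [e2] at h3
  exact h3

theorem mti_L_diff (p q i : ℝ) (hi : 0 ≤ i) (hip : i < p) (hq : 0 < q) :
    ((p - i + q)/q) * (mtiL (p - i) q - mtiL p q) =
      -((p - i + q)/(2*q)) * (mtiEta (p+q) - mtiEta p - mtiEta (p-i+q) + mtiEta (p-i))
        - 2800 * (q * i / (p + q)) := by
  unfold mtiL mtiL0
  have h1 : 0 < p - i := by linarith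
  have h2 : 0 < p := by linarith
  have e : (p - i + q)/q * ((p-i)*q/(p-i+q) - p*q/(p+q)) = - (q * i/(p+q)) := by
    field_simp; ring
  have e2 : (p - i + q)/(2*q) = ((p - i + q)/q)/2 := by field_simp
  rw [e2]
  linear_combination 2800 * e

theorem mti_F1 (p q i : ℝ) (hi : 0 ≤ i) (hip : i < p) (hq : 0 < q) :
    q * (Real.log (p+q) - Real.log (p-i+q)) ≤
      mtiEta (p+q) - mtiEta p - mtiEta (p-i+q) + mtiEta (p-i) := by
  have := mti_mono (p-i) p q (by linarith) (by linarith) hq.le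
  unfold mtiEta
  linarith

theorem mti_F2 (p q i : ℝ) (hi : 0 ≤ i) (hip : i < p) (hq : 0 < q) :
    i * (Real.log (p+q) - Real.log p) ≤
      mtiEta (p+q) - mtiEta p - mtiEta (p-i+q) + mtiEta (p-i) := by
  have := mti_mono (p-i) (p-i+q) i (by linarith) (by linarith) hi
  have e1 : p - i + i = p := by ring
  have e2 : p - i + q + i = p + q := by ring
  rw [e1, e2] at this
  unfold mtiEta
  linarith

theorem mti_bound_B (p q i : ℝ) (hi : 0 < i) (hip : i < p) (hq : 0 < q) (h200 : 200 * q ≤ p + q) :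
    (mtiEta (p+q) - mtiEta i - mtiEta (p - i + q)) +
      ((p - i + q)/q) * (mtiL (p - i) q - mtiL p q)
      + i/2 * (Real.log p - Real.log (p+q)) + (p-i+q)/2 * (Real.log q - Real.log (p+q))
     ≤ - (p-i+q)/2 - 14 * q := by
  rw [mti_L_diff p q i hi.le hip hq]
  have hF1 := mti_F1 p q i hi.le hip hq
  have hp : 0 < p := by linarith
  have hu : 0 < p - i + q := by linarith
  have hN : 0 < p + q := by linarith
  have h1 : (p-i+q)/(2*q) * (q * (Real.log (p+q) - Real.log (p-i+q))) ≤
     (p-i+q)/(2*q) * (mtiEta (p+q) - mtiEta p - mtiEta (p-i+q) + mtiEta (p-i)) :=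
    mul_le_mul_of_nonneg_left hF1 (by positivity)
  have e1 : (p-i+q)/(2*q) * (q * (Real.log (p+q) - Real.log (p-i+q))) =
    (p-i+q)/2 * (Real.log (p+q) - Real.log (p-i+q)) := by field_simp
  rw [e1] at h1
  have h2 : i * (Real.log (p+q) - Real.log i) ≤ p - i + q := by
    rw [← Real.log_div (by positivity) (by positivity)]
    have := Real.log_le_sub_one_of_pos (x := (p+q)/i) (by positivity)
    have := mul_le_mul_of_nonneg_left this hi.le
    have e : i * ((p+q)/i - 1) = p - i + q := by field_simp; ring
    linarith
  have h3 : i/2 * (Real.log p - Real.log (p+q)) ≤ 0 := by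
    have := Real.log_le_log hp (by linarith : p ≤ p + q)
    have := mul_nonneg hi.le (sub_nonneg.mpr this)
    linarith
  have h4 : (p-i+q)/2 * (Real.log q - Real.log (p-i+q) + 4) ≤ 28 * q := by
    have e : Real.log q - Real.log (p-i+q) + 4 = Real.log (q / (p-i+q) * Real.exp 4) := by
      rw [Real.log_mul (by positivity) (by positivity), Real.log_exp, Real.log_div (by positivity) (by positivity)]
    rw [e]
    have h := Real.log_le_sub_one_of_pos (x := (q / (p-i+q) * Real.exp 4)) (by positivity)
    have he : Real.exp 4 ≤ 56 := by
      have := Real.exp_one_lt_d9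
      have e4 : Real.exp 4 = Real.exp 1 ^ 4 := by rw [← Real.exp_nat_mul]; norm_num
      rw [e4]
      calc Real.exp 1 ^ 4 ≤ 2.7182818286 ^ 4 := by gcongr
        _ ≤ 56 := by norm_num
    have h' : Real.log (q / (p-i+q) * Real.exp 4) ≤ q / (p-i+q) * 56 := by
      have : q / (p-i+q) * Real.exp 4 ≤ q / (p-i+q) * 56 := by gcongr
      linarith
    have := mul_le_mul_of_nonneg_left h' (by positivity : 0 ≤ (p-i+q)/2)
    have e2 : (p-i+q)/2 * (q / (p-i+q) * 56) = 28 * q := by field_simp; ring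
    linarith
  have h5 : - (p-i+q) + 28 * q - 2800 * (q*i/(p+q)) ≤ - (p-i+q)/2 - 14 * q := by
    rcases le_or_gt ((p+q)/2) i with h | h
    · have : q / 2 ≤ q*i/(p+q) := by
        rw [div_le_div_iff₀ (by norm_num) hN]
        nlinarith
      linarith
    · have : 0 ≤ q*i/(p+q) := by positivity
      linarith
  have e3 : mtiEta (p+q) - mtiEta i - mtiEta (p-i+q) = i * (Real.log (p+q) - Real.log i) +
     (p-i+q) * (Real.log (p+q) - Real.log (p-i+q)) := by
    unfold mtiEta; ring
  rw [e3]
  linarith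

theorem mti_bound_A (p q i : ℕ) (hi : 0 < i) (hip : i < p) (hq : 0 < q)
    (h200 : (p + q : ℝ) ≤ 200 * q) :
    ((p+q).choose i : ℝ) * Real.exp (((p - i + q)/q) * (mtiL (p - i) q - mtiL p q)
      + i/2 * (Real.log p - Real.log (p+q)) + (p-i+q)/2 * (Real.log q - Real.log (p+q)))
     ≤ Real.exp (-(8 * i)) := by
  have hi' : (0:ℝ) < i := by exact_mod_cast hi
  have hq' : (0:ℝ) < q := by exact_mod_cast hq
  have hip' : (i:ℝ) < p := by exact_mod_cast hip
  have hp' : (0:ℝ) < p := by linarith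
  have hN : (0:ℝ) < p + q := by linarith
  have hu : (0:ℝ) < p - i + q := by linarith
  rw [mti_L_diff p q i hi'.le hip' hq']
  have hF2 := mti_F2 p q i hi'.le hip' hq'
  have hlogp : 0 ≤ Real.log (p+q) - Real.log p := 
    sub_nonneg.mpr (Real.log_le_log hp' (by linarith))
  have h1 : i/2 * (Real.log (p+q) - Real.log p) ≤
     (p-i+q)/(2*q) * (mtiEta (p+q) - mtiEta p - mtiEta (p-i+q) + mtiEta (p-i)) := by
    refine le_trans ?_ (mul_le_mul_of_nonneg_left hF2 (by positivity))
    have : (1:ℝ)/2 ≤ (p-i+q)/(2*q) := by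
      rw [div_le_div_iff₀ (by norm_num) (by positivity)]; linarith
    have := mul_le_mul_of_nonneg_right this (mul_nonneg hi'.le hlogp)
    linarith
  have h2 : (14:ℝ) * i ≤ 2800 * (q*i/(p+q)) := by
    have : (i:ℝ)/200 ≤ q*i/(p+q) := by
      rw [div_le_div_iff₀ (by norm_num) hN]
      nlinarith
    linarith
  have h3 : (p-i+q)/2 * (Real.log q - Real.log (p+q)) ≤ - p / 2 + i * 3 := by
    have h31 : Real.log q - Real.log (p+q) ≤ - p/(p+q) := by
      rw [← Real.log_div (by positivity) (by positivity)]
      have := Real.log_le_sub_one_of_pos (x := (q/(p+q) : ℝ)) (by positivity)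
      have e : (q/(p+q) : ℝ) - 1 = -p/(p+q) := by field_simp; ring
      linarith
    have h32 : -6 ≤ Real.log q - Real.log (p+q) := by
      have ha : Real.log (p+q) ≤ Real.log (Real.exp 6 * q) := by
        apply Real.log_le_log hN
        refine h200.trans ?_
        gcongr
        have := Real.exp_one_gt_d9
        have e4 : Real.exp 6 = Real.exp 1 ^ 6 := by rw [← Real.exp_nat_mul]; norm_num
        rw [e4]
        calc (200:ℝ) ≤ 2.7 ^ 6 := by norm_num
          _ ≤ _ := by gcongr; linarith
      rw [Real.log_mul (by positivity) (by positivity), Real.log_exp] at ha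
      linarith
    have h33 := mul_le_mul_of_nonneg_left h31 (by positivity : (0:ℝ) ≤ (p+q)/2)
    have e : (p+q:ℝ)/2 * (-p/(p+q)) = -p/2 := by field_simp
    have h34 := mul_le_mul_of_nonneg_left h32 (by positivity : (0:ℝ) ≤ i/2)
    linarith
  have h4 : ((p+q).choose i : ℝ) ≤ (p+q:ℝ)^i / i.factorial := by
    have := Nat.choose_le_pow_div (α := ℝ) i (p+q)
    push_cast at this; exact this
  have h5 : (p:ℝ)^i / i.factorial ≤ Real.exp (p/2) * 2^i := by
    have := Real.pow_div_factorial_le_exp (x := (p/2:ℝ)) (by positivity) i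
    rw [div_pow, div_div, div_le_iff₀ (by positivity)] at this
    rw [div_le_iff₀ (by positivity)]
    linarith
  have e2 : (2:ℝ)^i ≤ Real.exp i := by
    rw [← mul_one (i:ℝ), Real.exp_nat_mul]
    have := Real.add_one_le_exp (1:ℝ)
    gcongr; linarith
  have ei : Real.exp (i * (Real.log p - Real.log (p+q))) = (p:ℝ)^i/(p+q)^i := by
    rw [Real.exp_nat_mul, Real.exp_sub, Real.exp_log hp', Real.exp_log hN, div_pow]
  calc _ ≤ ((p+q:ℝ)^i / i.factorial) * Real.exp (i * (Real.log p - Real.log (p+q)) + (- p/2 - 11 * i)) := by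
        apply mul_le_mul h4 _ (by positivity) (by positivity)
        apply Real.exp_le_exp.mpr
        linarith
    _ = (p:ℝ)^i / i.factorial * Real.exp (-p/2 - 11 * i) := by
        rw [Real.exp_add, ei]; field_simp
    _ ≤ (Real.exp (p/2) * Real.exp i) * Real.exp (-p/2 - 11 * i) := by
        gcongr
        exact h5.trans (by gcongr)
    _ = Real.exp (-(10*i)) := by
        rw [← Real.exp_add, ← Real.exp_add]; congr 1; ring
    _ ≤ _ := Real.exp_le_exp.mpr (by linarith)

theorem mti_sqrt_pow (x : ℝ) (hx : 0 < x) (i : ℕ) : √x ^ i = Real.exp (i/2 * Real.log x) := by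
  have : √x = Real.exp (Real.log x / 2) := by
    rw [← Real.log_sqrt hx.le, Real.exp_log (by positivity)]
  rw [this, ← Real.exp_nat_mul]; congr 1; ring

theorem mti_term (p q i : ℕ) (hi : 0 < i) (hip : i < p) (hq : 0 < q) (b : ℝ)
    (hb : b ≤ Real.exp (((p - i + q)/q) * (mtiL (p - i) q - mtiL p q))) :
    ((p+q).choose i : ℝ) * b * √(p/(p+q))^i * √(q/(p+q))^(p+q-i) ≤
      Real.exp (-7) * (Real.exp (-i/2) + Real.exp (-((p+q-i : ℕ):ℝ)/2)) := by
  have hi' : (1:ℝ) ≤ i := by exact_mod_cast hi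
  have hi'' : (0:ℝ) < i := by exact_mod_cast hi
  have hq' : (0:ℝ) < q := by exact_mod_cast hq
  have hq1 : (1:ℝ) ≤ q := by exact_mod_cast hq
  have hip' : (i:ℝ) < p := by exact_mod_cast hip
  have hp' : (0:ℝ) < p := by linarith
  have hN : (0:ℝ) < p + q := by linarith
  have ec : ((p+q-i : ℕ):ℝ) = p - i + q := by
    rw [Nat.cast_sub (by omega)]; push_cast; ring
  rw [mti_sqrt_pow _ (by positivity), mti_sqrt_pow _ (by positivity), ec,
    Real.log_div (by positivity) (by positivity), Real.log_div (by positivity) (by positivity)]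
  have step : ((p+q).choose i : ℝ) * b * Real.exp (i/2 * (Real.log p - Real.log (p+q))) * 
      Real.exp ((p-i+q)/2 * (Real.log q - Real.log (p+q))) ≤ 
      ((p+q).choose i : ℝ) * Real.exp (((p - i + q)/q) * (mtiL (p - i) q - mtiL p q)
      + i/2 * (Real.log p - Real.log (p+q)) + (p-i+q)/2 * (Real.log q - Real.log (p+q))) := by
    rw [Real.exp_add, Real.exp_add, ← mul_assoc, ← mul_assoc]
    gcongr
  refine step.trans ?_
  rcases le_total ((p:ℝ)+q) (200*q) with h | h
  · refine (mti_bound_A p q i hi hip hq h).trans ?_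
    have : Real.exp (-(8*i)) ≤ Real.exp (-7) * Real.exp (-i/2) := by
      rw [← Real.exp_add]; apply Real.exp_le_exp.mpr; linarith
    refine this.trans ?_
    gcongr
    linarith [Real.exp_pos (-(p - i + q : ℝ)/2)]
  · have h1 := mti_bound_B p q i hi'' hip' hq' h
    have h2 := mti_choose_le (p+q) i (by omega)
    push_cast at h2
    have e : (p:ℝ) + q - i = p - i + q := by ring
    rw [e] at h2
    calc _ ≤ Real.exp (mtiEta (p+q) - mtiEta i - mtiEta (p-i+q)) * Real.exp (((p - i + q)/q) * (mtiL (p - i) q - mtiL p q)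
      + i/2 * (Real.log p - Real.log (p+q)) + (p-i+q)/2 * (Real.log q - Real.log (p+q))) := by
          gcongr
      _ ≤ Real.exp (-7) * Real.exp (-(p - i + q)/2) := by
          rw [← Real.exp_add, ← Real.exp_add]; apply Real.exp_le_exp.mpr; linarith
      _ ≤ _ := by
          gcongr
          linarith [Real.exp_pos (-(i : ℝ)/2)]

end AnalyticPart

section SumPart

theorem mti_exp_half : Real.exp (-1/2) ≤ 0.607 := by
  have h : Real.exp (-1/2) ^ 2 = (Real.exp 1)⁻¹ := by
    rw [← Real.exp_nat_mul, ← Real.exp_neg]; norm_num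
  have h1 : (Real.exp 1)⁻¹ ≤ 2.7182818283⁻¹ := inv_anti₀ (by norm_num) Real.exp_one_gt_d9.le
  have h2 : (2.7182818283:ℝ)⁻¹ ≤ 0.607^2 := by norm_num
  apply le_of_sq_le_sq (by linarith) (by norm_num)
  
theorem mti_ends_aux (p q : ℕ) (hp : 1 ≤ p) (hq : 1 ≤ q) (hN : 3 ≤ p + q) (hpq : q ≤ p) :
    √((p:ℝ)/(p+q))^(p+q) + √((q:ℝ)/(p+q))^(p+q) ≤ 0.97 := by
  have hp' : (1:ℝ) ≤ p := by exact_mod_cast hp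
  have hq' : (1:ℝ) ≤ q := by exact_mod_cast hq
  have hpq' : (q:ℝ) ≤ p := by exact_mod_cast hpq
  have h1 : √((p:ℝ)/(p+q))^(p+q) ≤ 0.607 := by
    rw [mti_sqrt_pow _ (by positivity)]
    refine le_trans (Real.exp_le_exp.mpr ?_) mti_exp_half
    have := Real.log_le_sub_one_of_pos (x := (p:ℝ)/(p+q)) (by positivity)
    have h2 := mul_le_mul_of_nonneg_left this (by positivity : (0:ℝ) ≤ ((p+q:ℕ):ℝ)/2)
    have e : ((p+q:ℕ):ℝ)/2 * ((p:ℝ)/(p+q) - 1) = -q/2 := by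
      push_cast; field_simp; ring
    linarith
  have h2 : √((q:ℝ)/(p+q))^(p+q) ≤ 0.36 := by
    have h0 : √((q:ℝ)/(p+q)) ≤ 0.7075 := by
      apply Real.sqrt_le_iff.mpr ⟨by norm_num, ?_⟩
      rw [div_le_iff₀ (by positivity)]
      nlinarith
    calc _ ≤ √((q:ℝ)/(p+q))^3 := pow_le_pow_of_le_one (by positivity) (by linarith) hN
      _ ≤ 0.7075^3 := by gcongr
      _ ≤ _ := by norm_num
  linarith

theorem mti_ends (p q : ℕ) (hp : 1 ≤ p) (hq : 1 ≤ q) (hN : 3 ≤ p + q) :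
    √((p:ℝ)/(p+q))^(p+q) + √((q:ℝ)/(p+q))^(p+q) ≤ 0.97 := by
  rcases le_total q p with h | h
  · exact mti_ends_aux p q hp hq hN h
  · have := mti_ends_aux q p hq hp (by omega) h
    rw [add_comm (q:ℝ) p, add_comm q p] at this
    linarith

theorem mti_geom (n : ℕ) : ∑ i ∈ Finset.range n, Real.exp (-(i:ℝ)/2) ≤ 3 := by
  have e : ∀ i : ℕ, Real.exp (-(i:ℝ)/2) = Real.exp (-1/2) ^ i := by
    intro i; rw [← Real.exp_nat_mul]; congr 1; ring
  simp only [e]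
  have h := mul_neg_geom_sum (Real.exp (-1/2)) n
  have h1 := mti_exp_half
  have h2 : 0 ≤ Real.exp (-1/2) ^ n := by positivity
  have h3 : 0 ≤ ∑ i ∈ Finset.range n, Real.exp (-1/2) ^ i := by positivity
  nlinarith

theorem mti_exp_seven : Real.exp (-6) ≤ 1/300 := by
  rw [Real.exp_neg, ← one_div]
  apply one_div_le_one_div_of_le (by norm_num)
  have := Real.exp_one_gt_d9
  have e4 : Real.exp 6 = Real.exp 1 ^ 6 := by rw [← Real.exp_nat_mul]; norm_num
  rw [e4]
  calc (300:ℝ) ≤ 2.7 ^ 6 := by norm_num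
    _ ≤ _ := by gcongr; linarith

theorem mti_L_comm (p q : ℝ) : mtiL p q = mtiL q p := by
  unfold mtiL mtiL0
  rw [add_comm p q, mul_comm p q]; ring

theorem mti_sum (p q : ℕ) (hp : 1 ≤ p) (hq : 2 ≤ q) (b : ℕ → ℝ) (hb : ∀ i, 0 ≤ b i)
    (hb0 : b 0 = 1) (hbN : b (p+q) = 1)
    (hl : ∀ i : ℕ, 0 < i → i < p →
      b i ≤ Real.exp (((p - i + q)/q) * (mtiL (p - i) q - mtiL p q)))
    (hr : ∀ d : ℕ, 0 < d → d + 1 < q →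
      b (p+q-d) ≤ Real.exp (((q - d + p)/p) * (mtiL (q - d) p - mtiL q p)))
    (hs : 1 ≤ ∑ i ∈ Finset.range (p+q+1), ((p+q).choose i : ℝ) * b i * √(p/(p+q))^i * √(q/(p+q))^(p+q-i)) :
    Real.exp (-6) ≤ ((p+q).choose p : ℝ) * b p * √(p/(p+q))^p * √(q/(p+q))^q ∨
    Real.exp (-6) ≤ ((p+q).choose (p+1) : ℝ) * b (p+1) * √(p/(p+q))^(p+1) * √(q/(p+q))^(q-1) := by
  set τ : ℕ → ℝ := fun i => ((p+q).choose i : ℝ) * b i * √(p/(p+q))^i * √(q/(p+q))^(p+q-i) with hτ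
  have hτp : ((p+q).choose p : ℝ) * b p * √(p/(p+q))^p * √(q/(p+q))^q = τ p := by
    simp [hτ]
  have hτp1 : ((p+q).choose (p+1) : ℝ) * b (p+1) * √(p/(p+q))^(p+1) * √(q/(p+q))^(q-1) = τ (p+1) := by
    simp only [hτ]
    congr 2; omega
  rw [hτp, hτp1]
  by_contra! hcon
  obtain ⟨hc1, hc2⟩ := hcon
  have hτ0 : ∀ i, 0 ≤ τ i := by
    intro i
    have := hb i
    simp only [hτ]; positivity
  have hends : τ (p+q) + τ 0 ≤ 0.97 := by
    have := mti_ends p q hp (by omega) (by omega)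
    simp only [hτ, hb0, hbN]
    simpa using this
  have hpt : ∀ i ∈ Finset.range (p+q+1), τ i ≤ Real.exp (-7) * (Real.exp (-(i:ℝ)/2) + Real.exp (-((p+q-i : ℕ):ℝ)/2)) 
     + (if i = 0 then τ 0 else 0) + (if i = p+q then τ (p+q) else 0) + (if i = p then τ p else 0) 
     + (if i = p+1 then τ (p+1) else 0) := by
    intro i hi
    have hpos : 0 ≤ Real.exp (-7) * (Real.exp (-(i:ℝ)/2) + Real.exp (-((p+q-i : ℕ):ℝ)/2)) := by positivity
    have hite : ∀ m, 0 ≤ (if i = m then τ m else 0) := by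
      intro m; split_ifs
      · exact hτ0 m
      · exact le_rfl
    have i0 := hite 0
    have iN := hite (p+q)
    have ip := hite p
    have ip1 := hite (p+1)
    rw [Finset.mem_range] at hi
    by_cases c0 : i = 0
    · have : (if i = 0 then τ 0 else 0) = τ i := by rw [if_pos c0, c0]
      linarith
    by_cases cN : i = p+q
    · have : (if i = p+q then τ (p+q) else 0) = τ i := by rw [if_pos cN, cN]
      linarith
    by_cases cp : i = p
    · have : (if i = p then τ p else 0) = τ i := by rw [if_pos cp, cp]
      linarith
    by_cases cp1 : i = p+1
    · have : (if i = p+1 then τ (p+1) else 0) = τ i := by rw [if_pos cp1, cp1]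
      linarith
    have hmain : τ i ≤ Real.exp (-7) * (Real.exp (-(i:ℝ)/2) + Real.exp (-((p+q-i : ℕ):ℝ)/2)) := by
      rcases lt_or_ge i p with hip | hip
      · exact mti_term p q i (by omega) hip (by omega) (b i) (hl i (by omega) hip)
      · obtain ⟨d, hd⟩ : ∃ d, d = p + q - i := ⟨_, rfl⟩
        have hid : i = p + q - d := by omega
        have := mti_term q p d (by omega) (by omega) (by omega) (b i) (by
          rw [hid]; exact hr d (by omega) (by omega))
        rw [add_comm q p, add_comm (q:ℝ) p, ← hid] at this
        rw [← hd]
        simp only [hτ]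
        rw [← hd]
        have ech : (p+q).choose i = (p+q).choose d := by
          rw [hd, Nat.choose_symm (by omega)]
        rw [ech]
        linarith
    linarith
  have hsum := Finset.sum_le_sum hpt
  simp only [Finset.sum_add_distrib, Finset.sum_ite_eq', ← Finset.mul_sum] at hsum
  rw [if_pos (Finset.mem_range.mpr (by omega)), if_pos (Finset.mem_range.mpr (by omega)),
    if_pos (Finset.mem_range.mpr (by omega)), if_pos (Finset.mem_range.mpr (by omega))] at hsum
  have g1 := mti_geom (p+q+1)
  have g2 : ∑ i ∈ Finset.range (p+q+1), Real.exp (-((p+q-i : ℕ):ℝ)/2) ≤ 3 := by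
    have := Finset.sum_range_reflect (fun i : ℕ => Real.exp (-(i:ℝ)/2)) (p+q+1)
    simp only [Nat.add_sub_cancel] at this
    rw [this]; exact g1
  have e6 := mti_exp_seven
  have e7 : Real.exp (-7) ≤ 1/600 := by
    have : Real.exp (-7) = Real.exp (-6) * (Real.exp (-1/2))^2 := by
      rw [← Real.exp_nat_mul, ← Real.exp_add]; norm_num
    have h := mti_exp_half
    have h' : (Real.exp (-1/2))^2 ≤ 0.607^2 := by gcongr
    rw [this]
    calc _ ≤ (1/300:ℝ) * 0.607^2 := by gcongr
      _ ≤ _ := by norm_num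
  have := mul_le_mul e7 (add_le_add g1 g2) (by positivity) (by norm_num)
  linarith

end SumPart

section FinalPart

theorem mti_line (n : ℕ) (y : Fin n → ℝ) (j N : ℕ) (hjN : j + N ≤ n) (α β P Q : ℝ)
    (hP : 0 < P) (hQ : 0 < Q)
    (h0 : |smean n j y| = Real.exp (α + β * j))
    (h1 : |smean n (j + N) y| = Real.exp (α + β * (j + N))) :
    √(P + Q) ^ N ≤ ∑ i ∈ Finset.range (N + 1), (N.choose i : ℝ) *
      (|smean n (j + i) y| * Real.exp (-(α + β * (j + i)))) * √P ^ i * √Q ^ (N - i) := by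
  have hg : 0 < Real.exp (-β) := Real.exp_pos _
  have hsP : 0 < √P := Real.sqrt_pos.2 hP
  have hsQ : 0 < √Q := Real.sqrt_pos.2 hQ
  have hw := mtiW_window (fun m => smean n m y) n (mtiW_base n y) j N hjN
  have hgp : ∀ i : ℕ, Real.exp (-β) ^ i = Real.exp (-β * i) := by
    intro i; rw [← Real.exp_nat_mul]; ring_nf
  have key := mti_window_ineq (fun i => smean n (j + i) y) N hw (Real.exp (-β))
    (Real.exp (-β) * √P / √Q) hg (by positivity)
    (by
      intro h
      rw [h, abs_zero] at h1
      exact absurd h1 (Real.exp_pos _).ne)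
    (by
      simp only [add_zero]
      rw [h0, h1, hgp, ← Real.exp_add]
      congr 1; ring)
  have e1 : √((Real.exp (-β) * √P / √Q) ^ 2 + Real.exp (-β) ^ 2)
      = Real.exp (-β) * √(P + Q) / √Q := by
    have e0 : (Real.exp (-β) * √P / √Q) ^ 2 + Real.exp (-β) ^ 2 =
        (Real.exp (-β) * √(P + Q) / √Q) ^ 2 := by
      rw [div_pow, div_pow, mul_pow, mul_pow, Real.sq_sqrt hP.le, Real.sq_sqrt hQ.le,
        Real.sq_sqrt (by positivity)]
      field_simp
    rw [e0, Real.sqrt_sq (by positivity)]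
  rw [e1, h1] at key
  have hpos : 0 < √Q ^ N * Real.exp (-(α + β * j)) := by positivity
  have key2 := mul_le_mul_of_nonneg_right key hpos.le
  have e2 : Real.exp (α + β * (j + N)) * (Real.exp (-β) * √(P + Q) / √Q) ^ N *
      (√Q ^ N * Real.exp (-(α + β * j))) = √(P + Q) ^ N := by
    have : Real.exp (α + β * (j + N)) * Real.exp (-β) ^ N * Real.exp (-(α + β * j)) = 1 := by
      rw [hgp, ← Real.exp_add, ← Real.exp_add, ← Real.exp_zero]
      congr 1; ring
    rw [div_pow, mul_pow]
    calc _ = (Real.exp (α + β * (j + N)) * Real.exp (-β) ^ N * Real.exp (-(α + β * j))) *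
          √(P + Q) ^ N * (√Q ^ N / √Q ^ N) := by ring
      _ = _ := by rw [this, div_self (by positivity)]; ring
  rw [e2, Finset.sum_mul] at key2
  refine key2.trans (le_of_eq (Finset.sum_congr rfl fun i hi => ?_))
  have hiN : i ≤ N := by simpa [Nat.lt_succ_iff] using hi
  have e3 : Real.exp (-(α + β * (j + i))) = Real.exp (-β) ^ i * Real.exp (-(α + β * j)) := by
    rw [hgp, ← Real.exp_add]; congr 1; ring
  have e4 : √Q ^ N = √Q ^ (N - i) * √Q ^ i := by rw [← pow_add]; congr 1; omega
  rw [e3, e4, div_pow, mul_pow]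
  field_simp

/-- The abstract window inequality, for sequences of nonnegative reals. -/
def mtiWin (n : ℕ) (a : ℕ → ℝ) : Prop :=
  ∀ (j N : ℕ), j + N ≤ n → ∀ α β P Q : ℝ, 0 < P → 0 < Q →
    a j = Real.exp (α + β * j) → a (j + N) = Real.exp (α + β * (j + N)) →
    √(P + Q) ^ N ≤ ∑ i ∈ Finset.range (N + 1), (N.choose i : ℝ) *
      (a (j + i) * Real.exp (-(α + β * (j + i)))) * √P ^ i * √Q ^ (N - i)

theorem mti_win (n : ℕ) (y : Fin n → ℝ) (c : ℝ) :
    mtiWin n (fun m => |smean n m y| * Real.exp (-(c * m))) := by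
  intro j N hjN α β P Q hP hQ h0 h1
  simp only at h0 h1
  have g0 : |smean n j y| = Real.exp (α + (β + c) * j) := by
    have : Real.exp (α + (β + c) * j) = Real.exp (α + β * j) * Real.exp (c * j) := by
      rw [← Real.exp_add]; congr 1; ring
    rw [this, ← h0, mul_assoc, ← Real.exp_add]; simp
  have g1 : |smean n (j + N) y| = Real.exp (α + (β + c) * (j + N)) := by
    have : Real.exp (α + (β + c) * (j + N)) =
        Real.exp (α + β * (j + N)) * Real.exp (c * (j + N)) := by
      rw [← Real.exp_add]; congr 1; ring
    rw [this, ← h1, mul_assoc, ← Real.exp_add]; simp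
  refine (mti_line n y j N hjN α (β + c) P Q hP hQ g0 g1).trans
    (le_of_eq (Finset.sum_congr rfl fun i _ => ?_))
  have : Real.exp (-(α + (β + c) * (j + i))) =
      Real.exp (-(c * ((j + i : ℕ) : ℝ))) * Real.exp (-(α + β * (j + i))) := by
    rw [← Real.exp_add]; congr 1; push_cast; ring
  rw [this]; ring

/-- The functional which is maximised. -/
noncomputable def mtiF (a : ℕ → ℝ) (k : ℕ) (x : ℕ × ℕ) : ℝ :=
  (((x.2 : ℝ) - k) * Real.log (a x.1) + ((k : ℝ) - x.1) * Real.log (a x.2)) / ((x.2 : ℝ) - x.1)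
    - mtiL ((k : ℝ) - x.1) ((x.2 : ℝ) - k)

theorem mti_extremal (a : ℕ → ℝ) (k l0 : ℕ) (hk : 1 ≤ k) (hkl : k + 2 ≤ l0)
    (h0 : a 0 ≠ 0) (hl : a l0 ≠ 0) :
    ∃ j l : ℕ, j < k ∧ k + 2 ≤ l ∧ l ≤ l0 ∧ a j ≠ 0 ∧ a l ≠ 0 ∧
      ∀ j' l' : ℕ, j' < k → k + 2 ≤ l' → l' ≤ l0 → a j' ≠ 0 → a l' ≠ 0 →
        mtiF a k (j', l') ≤ mtiF a k (j, l) := by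
  classical
  let S := ((Finset.range k) ×ˢ (Finset.Icc (k+2) l0)).filter (fun x => a x.1 ≠ 0 ∧ a x.2 ≠ 0)
  have hS : S.Nonempty := ⟨(0, l0), by simp [S, h0, hl]; omega⟩
  obtain ⟨⟨j, l⟩, hx, hmax⟩ := Finset.exists_max_image S (mtiF a k) hS
  simp [S] at hx
  refine ⟨j, l, hx.1.1, hx.1.2.1, hx.1.2.2, hx.2.1, hx.2.2, ?_⟩
  intro j' l' h1 h2 h3 h4 h5
  exact hmax (j', l') (by simp [S]; exact ⟨⟨h1, h2, h3⟩, h4, h5⟩)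


theorem mti_alg (g gl v β p q L1 L2 : ℝ) (hp : 0 < p) (hq : 0 < q) (hgl : gl = v + β * q)
    (h : (q * g + p * gl) / (p + q) - L1 ≤ v - L2) :
    g ≤ v - β * p + ((p + q) / q) * (L1 - L2) := by
  subst hgl
  have hpq : 0 < p + q := by linarith
  have h1 : (q * g + p * (v + β * q)) / (p + q) ≤ v + (L1 - L2) := by linarith
  rw [div_le_iff₀ hpq] at h1
  have h2 : q * g ≤ q * (v - β * p) + (p + q) * (L1 - L2) := by nlinarith
  have e : v - β * p + ((p + q) / q) * (L1 - L2) =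
      (q * (v - β * p) + (p + q) * (L1 - L2)) / q := by
    field_simp
  rw [e, le_div_iff₀ hq]
  linarith

theorem mti_core (n : ℕ) (a : ℕ → ℝ) (ha : ∀ m, 0 ≤ a m) (hw : mtiWin n a) (k l0 : ℕ)
    (hk : 1 ≤ k) (hkl : k + 2 ≤ l0) (hln : l0 ≤ n) (h0 : a 0 = 1) (hl0 : a l0 = 1) :
    ∃ (p q : ℕ) (α β : ℝ), 1 ≤ p ∧ p ≤ k ∧ 2 ≤ q ∧ k + q ≤ l0 ∧
      mtiL p q - mtiL k (l0 - k) ≤ α + β * k ∧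
      -(((l0 - k + p : ℝ) / p) * (mtiL (l0 - k) p - mtiL q p)) ≤ α + β * l0 ∧
      (Real.exp (-6) ≤ ((p+q).choose p : ℝ) * (a k * Real.exp (-(α + β * k))) *
          √(p/(p+q))^p * √(q/(p+q))^q ∨
       Real.exp (-6) ≤ ((p+q).choose (p+1) : ℝ) * (a (k+1) * Real.exp (-(α + β * (k+1)))) *
          √(p/(p+q))^(p+1) * √(q/(p+q))^(q-1)) := by
  obtain ⟨j, l, hj, hl, hll, haj, hal, hmax⟩ :=
    mti_extremal a k l0 hk hkl (by simp [h0]) (by simp [hl0])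
  obtain ⟨p, rfl⟩ : ∃ p, k = j + p := ⟨k - j, by omega⟩
  obtain ⟨q, rfl⟩ : ∃ q, l = j + p + q := ⟨l - (j + p), by omega⟩
  have hp1 : 1 ≤ p := by omega
  have hq2 : 2 ≤ q := by omega
  have hp : (0:ℝ) < p := by exact_mod_cast hp1
  have hq : (0:ℝ) < q := by exact_mod_cast (by omega : 0 < q)
  have hpq : (0:ℝ) < (p:ℝ) + q := by linarith
  have hajp : 0 < a j := lt_of_le_of_ne (ha j) (Ne.symm haj)
  have halp : 0 < a (j + p + q) := lt_of_le_of_ne (ha _) (Ne.symm hal)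
  set gj := Real.log (a j) with hgj
  set gl := Real.log (a (j + p + q)) with hgl
  set β := (gl - gj) / (p + q) with hβ
  set α := gj - β * j with hα
  have hβ' : β * (p + q) = gl - gj := by rw [hβ]; field_simp
  set v := α + β * ((j + p : ℕ) : ℝ) with hv
  have hv1 : gj = v - β * p := by rw [hv, hα]; push_cast; ring
  have hv2 : gl = v + β * q := by linarith
  have hFjl : mtiF a (j + p) (j, j + p + q) = v - mtiL p q := by
    unfold mtiF
    simp only [← hgj, ← hgl]
    push_cast
    rw [hv1, hv2]
    have e1 : (j:ℝ) + p - j = p := by ring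
    have e2 : (j:ℝ) + p + q - (j + p) = q := by ring
    have e3 : (j:ℝ) + p + q - j = p + q := by ring
    rw [e1, e2, e3]
    congr 1
    field_simp
    ring
  -- left bounds
  have left : ∀ m : ℕ, m < j + p → a m ≠ 0 →
      Real.log (a m) ≤ v - β * ((j + p : ℕ) - m : ℝ) +
        ((((j + p : ℕ) - m : ℝ) + q) / q) * (mtiL ((j + p : ℕ) - m : ℝ) q - mtiL p q) := by
    intro m hm ham
    have h := hmax m (j + p + q) hm hl hll ham hal
    rw [hFjl] at h
    unfold mtiF at h
    simp only [← hgl] at h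
    have hm' : (m:ℝ) < ((j + p : ℕ) : ℝ) := by exact_mod_cast hm
    refine mti_alg _ gl v β _ q _ _ (by linarith) hq hv2 ?_
    have e2 : ((j + p + q : ℕ):ℝ) - (j + p : ℕ) = q := by push_cast; ring
    have e3 : ((j + p + q : ℕ):ℝ) - m = ((j + p : ℕ) - m : ℝ) + q := by push_cast; ring
    rw [e2, e3] at h
    exact h
  have right : ∀ m : ℕ, j + p + 2 ≤ m → m ≤ l0 → a m ≠ 0 →
      Real.log (a m) ≤ v + β * (m - (j + p : ℕ) : ℝ) +
        (((m - (j + p : ℕ) : ℝ) + p) / p) * (mtiL (m - (j + p : ℕ) : ℝ) p - mtiL q p) := by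
    intro m hm hml ham
    have h := hmax j m hj hm hml haj ham
    rw [hFjl] at h
    unfold mtiF at h
    simp only [← hgj] at h
    have hm' : ((j + p : ℕ) : ℝ) < (m:ℝ) := by exact_mod_cast (by omega : j + p < m)
    have := mti_alg (Real.log (a m)) gj v (-β) (m - (j + p : ℕ) : ℝ) p
      (mtiL (m - (j + p : ℕ) : ℝ) p) (mtiL q p) (by linarith) hp (by linarith) ?_
    · linarith
    · have e2 : ((j + p : ℕ):ℝ) - j = p := by push_cast; ring
      have e3 : (m:ℝ) - j = (m - (j + p : ℕ) : ℝ) + p := by push_cast; ring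
      rw [e2, e3] at h
      rw [mti_L_comm _ (p:ℝ), mti_L_comm q (p:ℝ), add_comm ((p:ℝ) * _)]
      exact h
  refine ⟨p, q, α, β, hp1, by omega, hq2, by omega, ?_, ?_, ?_⟩
  · have h := hmax 0 l0 (by omega) hkl le_rfl (by simp [h0]) (by simp [hl0])
    rw [hFjl] at h
    unfold mtiF at h
    simp only [h0, hl0, Real.log_one] at h
    simp only [mul_zero, add_zero, zero_div, Nat.cast_zero, sub_zero] at h
    linarith
  · have h := right l0 hkl le_rfl (by simp [hl0])
    rw [hl0, Real.log_one] at h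
    have : α + β * l0 = v + β * ((l0:ℝ) - (j + p : ℕ)) := by rw [hv]; ring
    rw [this]
    linarith
  · have hajE : a j = Real.exp (α + β * j) := by
      rw [hα, sub_add_cancel, hgj, Real.exp_log hajp]
    have halE : a (j + (p + q)) = Real.exp (α + β * (j + ((p + q : ℕ) : ℝ))) := by
      have : α + β * (j + ((p + q : ℕ) : ℝ)) = gl := by rw [hv2, hv]; push_cast; ring
      rw [this, hgl, Real.exp_log halp, add_assoc]
    have hs := hw j (p + q) (by omega) α β (p / (p + q)) (q / (p + q)) (by positivity)
      (by positivity) hajE halE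
    have e1 : (p:ℝ) / (p + q) + q / (p + q) = 1 := by field_simp
    rw [e1, Real.sqrt_one, one_pow] at hs
    have fin := mti_sum p q hp1 hq2
      (fun i => a (j + i) * Real.exp (-(α + β * (j + i))))
      (fun i => mul_nonneg (ha _) (Real.exp_pos _).le)
      (by
        simp only [add_zero, Nat.cast_zero]
        rw [hajE, ← Real.exp_add]; simp)
      (by
        rw [halE, ← Real.exp_add]; simp)
      ?_ ?_ hs
    · rcases fin with h | h
      · left
        push_cast
        exact h
      · right
        push_cast
        push_cast at h
        rw [← add_assoc j p 1, ← add_assoc (j:ℝ) p 1] at h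
        exact h
    · intro i hi hip
      by_cases hz : a (j + i) = 0
      · rw [hz, zero_mul]; exact (Real.exp_pos _).le
      have h := left (j + i) (by omega) hz
      rw [← Real.exp_log (lt_of_le_of_ne (ha (j + i)) (Ne.symm hz)), ← Real.exp_add]
      apply Real.exp_le_exp.2
      have e2 : ((j + p : ℕ) : ℝ) - ((j + i : ℕ) : ℝ) = p - i := by push_cast; ring
      rw [e2] at h
      have e4 : α + β * (j + i) = v - β * (p - i) := by rw [hv]; push_cast; ring
      rw [e4]; linarith
    · intro d hd hdq
      by_cases hz : a (j + (p + q - d)) = 0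
      · rw [hz, zero_mul]; exact (Real.exp_pos _).le
      have h := right (j + (p + q - d)) (by omega) (by omega) hz
      rw [← Real.exp_log (lt_of_le_of_ne (ha _) (Ne.symm hz)), ← Real.exp_add]
      apply Real.exp_le_exp.2
      have e0 : ((p + q - d : ℕ) : ℝ) = p + q - d := by
        rw [Nat.cast_sub (by omega)]; push_cast; ring
      have e2 : ((j + (p + q - d) : ℕ) : ℝ) - ((j + p : ℕ) : ℝ) = q - d := by
        rw [Nat.cast_add, e0]; push_cast; ring
      rw [e2] at h
      have e4 : α + β * (j + ((p + q - d : ℕ) : ℝ)) = v + β * (q - d) := by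
        rw [hv, e0]; push_cast; ring
      rw [e4]; linarith


theorem mti_logdiff (x y : ℝ) (hx : 0 < x) (hy : 0 < y) :
    x * (Real.log (x + y) - Real.log x) ≤ y := by
  rw [← Real.log_div (by positivity) (by positivity)]
  have := Real.log_le_sub_one_of_pos (show 0 < (x + y) / x by positivity)
  have h2 : x * Real.log ((x + y) / x) ≤ x * ((x + y) / x - 1) :=
    mul_le_mul_of_nonneg_left this hx.le
  have : x * ((x + y) / x - 1) = y := by field_simp; ring
  linarith

theorem mti_E1 (p q : ℕ) (hp : 1 ≤ p) (hq : 1 ≤ q) :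
    ((p+q).choose p : ℝ) * (√(p/(p+q))^p * √(q/(p+q))^q) ≤ Real.exp (mtiL0 p q) := by
  have hp' : (0:ℝ) < p := by exact_mod_cast hp
  have hq' : (0:ℝ) < q := by exact_mod_cast hq
  have hc := mti_choose_le (p+q) p (by omega)
  rw [mti_sqrt_pow _ (by positivity), mti_sqrt_pow _ (by positivity), ← Real.exp_add]
  refine (mul_le_mul_of_nonneg_right hc (Real.exp_pos _).le).trans ?_
  rw [← Real.exp_add]
  apply Real.exp_le_exp.2
  rw [Real.log_div (by positivity) (by positivity), Real.log_div (by positivity) (by positivity)]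
  push_cast
  have e : (p:ℝ) + q - p = q := by ring
  rw [e]
  unfold mtiL0 mtiEta
  linarith

theorem mti_E2 (p q : ℕ) (hp : 1 ≤ p) (hq : 2 ≤ q) :
    ((p+q).choose (p+1) : ℝ) * (√(p/(p+q))^(p+1) * √(q/(p+q))^(q-1)) ≤
      Real.exp (mtiL0 p q + (Real.log (p+q) - Real.log p)/2 + 1) := by
  have hp' : (0:ℝ) < p := by exact_mod_cast hp
  have hq2 : (2:ℝ) ≤ q := by exact_mod_cast hq
  have hq' : (0:ℝ) < q := by linarith
  have hc := mti_choose_le (p+q) (p+1) (by omega)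
  rw [mti_sqrt_pow _ (by positivity), mti_sqrt_pow _ (by positivity), ← Real.exp_add]
  refine (mul_le_mul_of_nonneg_right hc (Real.exp_pos _).le).trans ?_
  rw [← Real.exp_add]
  apply Real.exp_le_exp.2
  rw [Real.log_div (by positivity) (by positivity), Real.log_div (by positivity) (by positivity)]
  have eq1 : ((q - 1 : ℕ) : ℝ) = q - 1 := by rw [Nat.cast_sub (by omega)]; simp
  rw [eq1]
  push_cast
  have e : (p:ℝ) + q - (p + 1) = q - 1 := by ring
  rw [e]
  unfold mtiL0 mtiEta
  have h1 := mti_logdiff ((q:ℝ) - 1) 1 (by linarith) one_pos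
  rw [sub_add_cancel] at h1
  have h2 : Real.log p ≤ Real.log (p + 1) := Real.log_le_log hp' (by linarith)
  have h3 : ((p:ℝ) + 1) * Real.log p ≤ (p + 1) * Real.log (p + 1) :=
    mul_le_mul_of_nonneg_left h2 (by positivity)
  have h4 : Real.log q ≤ Real.log (p + q) := Real.log_le_log hq' (by linarith)
  nlinarith

theorem mti_E3 (p q : ℝ) (hp : 0 < p) (hq : 0 < q) :
    (p / 2) * (Real.log (p + q) - Real.log p) ≤ mtiL0 p q ∧ mtiL0 p q ≤ mtiL p q := by
  constructor
  · unfold mtiL0 mtiEta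
    have h4 : Real.log q ≤ Real.log (p + q) := Real.log_le_log hq (by linarith)
    nlinarith
  · unfold mtiL
    have : 0 ≤ p * q / (p + q) := by positivity
    linarith

theorem mti_E4 (p q : ℝ) (hp : 0 < p) (hq : 0 < q) :
    mtiL p q ≤ (p / 2) * (Real.log (p + q) - Real.log p) + p / 2 + 2800 * p := by
  have h := mti_logdiff q p hq hp
  rw [add_comm q p] at h
  have h2 : p * q / (p + q) ≤ p := by
    rw [div_le_iff₀ (by positivity)]; nlinarith
  unfold mtiL mtiL0 mtiEta
  nlinarith

theorem mti_E5 (p q : ℝ) (hp : 1 ≤ p) (hq : 1 ≤ q) :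
    ((p + q) / (p * q)) * mtiL p q ≤ 2800 + Real.log (p + q) / 2 + 1 + p / 2 := by
  have hp0 : 0 < p := by linarith
  have hq0 : 0 < q := by linarith
  have h1 := mti_logdiff q p hq0 hp0
  rw [add_comm q p] at h1
  have h2 := mti_logdiff p q hp0 hq0
  have h3 : 0 ≤ Real.log p := Real.log_nonneg hp
  have e : ((p + q) / (p * q)) * mtiL p q = 2800 + (Real.log (p + q) - Real.log p) / 2 +
      (p * (Real.log (p + q) - Real.log p)) / q / 2 +
      ((p + q) * (q * (Real.log (p + q) - Real.log q))) / (p * q) / 2 := by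
    unfold mtiL mtiL0 mtiEta
    field_simp
    ring
  rw [e]
  have h4 : (p * (Real.log (p + q) - Real.log p)) / q ≤ 1 := by
    rw [div_le_one hq0]; exact h2
  have h5 : ((p + q) * (q * (Real.log (p + q) - Real.log q))) / (p * q) ≤ 1 + p := by
    rw [div_le_iff₀ (by positivity)]
    have : (p + q) * (q * (Real.log (p + q) - Real.log q)) ≤ (p + q) * p :=
      mul_le_mul_of_nonneg_left h1 (by positivity)
    nlinarith [mul_nonneg hp0.le hp0.le, mul_nonneg (mul_nonneg hp0.le hp0.le) (sub_nonneg.2 hq)]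
  linarith

theorem mti_extract (t c x b e : ℝ) (hx : 0 ≤ x) (hc : c ≤ Real.exp e)
    (h : Real.exp t ≤ c * (x * Real.exp (-b))) : 0 < x ∧ t - e + b ≤ Real.log x := by
  have h1 : Real.exp t ≤ Real.exp e * (x * Real.exp (-b)) :=
    h.trans (mul_le_mul_of_nonneg_right hc (mul_nonneg hx (Real.exp_pos _).le))
  have hx0 : 0 < x := by
    rcases hx.lt_or_eq with h' | h'
    · exact h'
    · rw [← h'] at h1
      simp at h1
      exact absurd h1 (not_le.2 (Real.exp_pos _))
  refine ⟨hx0, ?_⟩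
  have : Real.exp e * (x * Real.exp (-b)) = Real.exp (e + Real.log x - b) := by
    rw [sub_eq_add_neg, Real.exp_add, Real.exp_add, Real.exp_log hx0]; ring
  rw [this] at h1
  have := Real.exp_le_exp.1 h1
  linarith

theorem mti_final (n : ℕ) (a : ℕ → ℝ) (ha : ∀ m, 0 ≤ a m) (hw : mtiWin n a) (k l0 : ℕ)
    (hk : 1 ≤ k) (hkl : k + 2 ≤ l0) (hln : l0 ≤ n) (h0 : a 0 = 1) (hl0 : a l0 = 1) :
    (0 < a k ∧ -((k / 2 : ℝ) * (Real.log l0 - Real.log k)) - 6000 * k ≤ Real.log (a k)) ∨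
    (0 < a (k+1) ∧ -((((k:ℝ) + 1) / 2) * (Real.log l0 - Real.log ((k:ℝ) + 1))) - 6000 * ((k:ℝ) + 1)
      ≤ Real.log (a (k + 1))) := by
  obtain ⟨p, q, α, β, hp1, hpk, hq2, hkq, hA, hB, hC⟩ := mti_core n a ha hw k l0 hk hkl hln h0 hl0
  have hk' : (1:ℝ) ≤ k := by exact_mod_cast hk
  have hp' : (1:ℝ) ≤ p := by exact_mod_cast hp1
  have hpk' : (p:ℝ) ≤ k := by exact_mod_cast hpk
  have hq' : (2:ℝ) ≤ q := by exact_mod_cast hq2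
  have hl' : (k:ℝ) + 2 ≤ l0 := by exact_mod_cast hkl
  set Q : ℝ := (l0:ℝ) - k with hQ
  have hQ2 : 2 ≤ Q := by linarith
  have hkQ : (k:ℝ) + Q = l0 := by rw [hQ]; ring
  have h4 := mti_E4 k Q (by linarith) (by linarith)
  rw [hkQ] at h4
  obtain ⟨h3a, h3b⟩ := mti_E3 p q (by linarith) (by linarith)
  rcases hC with h | h
  · left
    have := mti_extract (-6) _ (a k) _ _ (ha k) (mti_E1 p q hp1 (by omega))
      (h.trans (le_of_eq (by ring)))
    refine ⟨this.1, ?_⟩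
    linarith [this.2]
  · right
    have := mti_extract (-6) _ (a (k+1)) _ _ (ha (k+1)) (mti_E2 p q hp1 hq2)
      (h.trans (le_of_eq (by ring)))
    refine ⟨this.1, le_trans ?_ this.2⟩
    have h5 := mti_E5 p Q hp' (by linarith)
    have hlog : Real.log (p + Q) ≤ Real.log l0 := Real.log_le_log (by linarith) (by linarith)
    have h40 := mti_E3 k Q (by linarith) (by linarith)
    have hmono : Real.log k ≤ Real.log (k + Q) := Real.log_le_log (by linarith) (by linarith)
    have hLk : 0 ≤ mtiL k Q := by
      have : 0 ≤ ((k:ℝ) / 2) * (Real.log (k + Q) - Real.log k) :=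
        mul_nonneg (by linarith) (by linarith)
      linarith [h40.1, h40.2]
    have hQ0 : 0 < Q := by linarith
    have hp0 : (0:ℝ) < p := by linarith
    rw [mti_L_comm Q p, mti_L_comm q p] at hB
    -- the line at `k + 1`
    have hline : α + β * (k + 1) = (1 - 1 / Q) * (α + β * k) + (α + β * l0) / Q := by
      rw [← hkQ]; field_simp; ring
    have hA' : (1 - 1 / Q) * (mtiL p q - mtiL k Q) ≤ (1 - 1 / Q) * (α + β * k) := by
      apply mul_le_mul_of_nonneg_left hA
      rw [sub_nonneg, div_le_one hQ0]; linarith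
    have hB' := div_le_div_of_nonneg_right hB hQ0.le
    have hcomb : (1 - 1 / Q) * (mtiL p q - mtiL k Q) +
        -(((Q + p : ℝ) / p) * (mtiL p Q - mtiL p q)) / Q =
        mtiL p q + mtiL p q / p - mtiL k Q + mtiL k Q / Q - ((p + Q) / (p * Q)) * mtiL p Q := by
      field_simp; ring
    have hk1 : 0 ≤ mtiL k Q / Q := div_nonneg hLk hQ0.le
    have h3c : (Real.log (p + q) - Real.log p) / 2 ≤ mtiL p q / p := by
      rw [le_div_iff₀ hp0]; linarith
    have hl1 := mti_logdiff k 1 (by linarith) one_pos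
    have hl2 := Real.log_le_sub_one_of_pos (show (0:ℝ) < k + 1 by linarith)
    rw [hline]
    nlinarith


theorem mti_conv (κ l A x : ℝ) (hκ : 0 < κ) (hl : 0 < l) (hA : 0 < A) (hx : 0 < x)
    (h : -((κ / 2) * (Real.log l - Real.log κ)) - 6000 * κ ≤
      Real.log (x * Real.exp (-(Real.log A / l * κ)))) :
    A ^ ((1:ℝ) / l) ≤ Real.exp 6000 * ((l / κ) ^ ((1:ℝ) / 2) * x ^ ((1:ℝ) / κ)) := by
  rw [Real.rpow_def_of_pos hA, Real.rpow_def_of_pos hx, Real.rpow_def_of_pos (by positivity),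
    ← Real.exp_add, ← Real.exp_add]
  apply Real.exp_le_exp.2
  rw [Real.log_mul hx.ne' (Real.exp_pos _).ne', Real.log_exp] at h
  rw [Real.log_div hl.ne' hκ.ne']
  have e : 6000 + ((Real.log l - Real.log κ) * (1 / 2) + Real.log x * (1 / κ)) =
      (6000 * κ + (κ / 2) * (Real.log l - Real.log κ) + Real.log x) / κ := by
    field_simp
    ring
  rw [e, le_div_iff₀ hκ]
  have : Real.log A * (1 / l) * κ = Real.log A / l * κ := by ring
  linarith

end FinalPart


theorem maclaurin_type_inequality :
    ∃ C : ℝ, 0 < C ∧ ∀ (n : ℕ), 1 ≤ n → ∀ (y : Fin n → ℝ) (k ℓ : ℕ),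
      1 ≤ k → k < ℓ → ℓ ≤ n →
      |smean n ℓ y| ^ ((1 : ℝ) / ℓ) ≤
        C * max (((ℓ : ℝ) / k) ^ ((1 : ℝ) / 2) * |smean n k y| ^ ((1 : ℝ) / k))
          (((ℓ : ℝ) / (k + 1)) ^ ((1 : ℝ) / 2) * |smean n (k + 1) y| ^ ((1 : ℝ) / (k + 1))) := by
  refine ⟨Real.exp 6000, Real.exp_pos _, ?_⟩
  intro n hn y k ℓ hk hkl hln
  have hk' : (0:ℝ) < k := by exact_mod_cast hk
  have hl' : (0:ℝ) < ℓ := by exact_mod_cast (by omega : 0 < ℓ)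
  have hmax0 : 0 ≤ Real.exp 6000 *
      max (((ℓ : ℝ) / k) ^ ((1 : ℝ) / 2) * |smean n k y| ^ ((1 : ℝ) / k))
          (((ℓ : ℝ) / (k + 1)) ^ ((1 : ℝ) / 2) * |smean n (k + 1) y| ^ ((1 : ℝ) / (k + 1))) :=
    mul_nonneg (Real.exp_pos _).le (le_max_of_le_left (by positivity))
  by_cases hz : smean n ℓ y = 0
  · rw [hz, abs_zero, Real.zero_rpow (by positivity)]
    exact hmax0
  have hA : 0 < |smean n ℓ y| := abs_pos.2 hz
  by_cases hkl2 : k + 1 = ℓ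
  · subst hkl2
    have h1 : (((k + 1 : ℕ) : ℝ) / (k + 1)) ^ ((1 : ℝ) / 2) = 1 := by
      push_cast
      rw [div_self (by positivity), Real.one_rpow]
    rw [h1, one_mul]
    push_cast
    have h2 : (1:ℝ) ≤ Real.exp 6000 := Real.one_le_exp (by norm_num)
    refine (le_max_right _ _).trans (le_mul_of_one_le_left ?_ h2)
    exact le_max_of_le_right (by positivity)
  have hs0 : smean n 0 y = 1 := by simp [smean, esymmS]
  set c : ℝ := Real.log |smean n ℓ y| / ℓ with hc
  have hfin := mti_final n (fun m => |smean n m y| * Real.exp (-(c * m)))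
    (fun m => mul_nonneg (abs_nonneg _) (Real.exp_pos _).le) (mti_win n y c) k ℓ hk
    (by omega) hln (by simp [hs0])
    (by
      have : c * ℓ = Real.log |smean n ℓ y| := by rw [hc]; field_simp
      rw [this, Real.exp_neg, Real.exp_log hA, mul_inv_cancel₀ hA.ne'])
  rcases hfin with ⟨hpos, hle⟩ | ⟨hpos, hle⟩
  · have hx : 0 < |smean n k y| := pos_of_mul_pos_left hpos (Real.exp_pos _).le
    refine (mti_conv k ℓ _ _ hk' hl' hA hx hle).trans ?_
    exact mul_le_mul_of_nonneg_left (le_max_left _ _) (Real.exp_pos _).le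
  · have hx : 0 < |smean n (k + 1) y| := pos_of_mul_pos_left hpos (Real.exp_pos _).le
    push_cast at hle
    refine (mti_conv ((k:ℝ) + 1) ℓ _ _ (by positivity) hl' hA hx hle).trans ?_
    exact mul_le_mul_of_nonneg_left (le_max_right _ _) (Real.exp_pos _).le
end

section
/- For every n ≥ 1, all real numbers y_1, …, y_n, and all integers 1 ≤ k < ℓ ≤ n, one has |s_ℓ(y)|^(1/ℓ) ≤ 160·e^7 · max( (ℓ/k)^(1/2) · |s_k(y)|^(1/k), (ℓ/(k+1))^(1/2) · |s_{k+1}(y)|^(1/(k+1)) ). -/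
open Finset Real

open Polynomial in
theorem splits_derivative_real {p : ℝ[X]} (hp : p.Splits) : (derivative p).Splits := by
  rw [splits_iff_card_roots] at *
  have h1 := card_roots_le_derivative p
  have h2 := (derivative p).card_roots'
  have h3 := natDegree_derivative_le p
  rcases Nat.eq_zero_or_pos p.natDegree with h | h
  · have : derivative p = 0 := by
      rw [eq_C_of_natDegree_eq_zero h]; simp
    simp [this]
  · omega

open Polynomial in
theorem splits_iterate_derivative_real {p : ℝ[X]} (hp : p.Splits) (k : ℕ) :
    (derivative^[k] p).Splits := by
  induction k with
  | zero => simpa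
  | succ k ih => rw [Function.iterate_succ_apply']; exact splits_derivative_real ih

open Polynomial in
theorem splits_reverse_real {p : ℝ[X]} (hp : p.Splits) : p.reverse.Splits := by
  rw [hp.eq_prod_roots, reverse_mul_of_domain, reverse_C]
  refine Splits.mul (Splits.C _) ?_
  generalize p.roots = s
  induction s using Multiset.induction with
  | empty => simp [← C_1, -map_one]
  | cons a s ih =>
    rw [Multiset.map_cons, Multiset.prod_cons, reverse_mul_of_domain]
    refine Splits.mul ?_ ih
    apply Splits.of_natDegree_le_one
    exact (reverse_natDegree_le _).trans (by simp)

open Polynomial in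
theorem exists_window_poly (n : ℕ) (y : Fin n → ℝ) (j N : ℕ) (h : j + N ≤ n) :
    ∃ Q : ℝ[X], Q.Splits ∧ Q.natDegree ≤ N ∧
      ∀ d ≤ N, Q.coeff d = (N.choose d : ℝ) * smean n (j + d) y := by
  set m := j + N with hm
  set P : ℝ[X] := ∏ i : Fin n, (X + C (y i)) with hP
  have hPs : P.Splits := by
    apply Splits.prod
    intro i _
    exact Splits.X_add_C _
  have hPc : ∀ e ≤ n, P.coeff e = (n.choose e : ℝ) * smean n (n - e) y := by
    intro e he
    have := Finset.prod_X_add_C_coeff (univ : Finset (Fin n)) y (k := e) (by simpa using he)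
    rw [hP, this, smean, esymmS, card_univ, Fintype.card_fin, Nat.choose_symm he]
    have : (n.choose e : ℝ) ≠ 0 := by exact_mod_cast (Nat.choose_pos he).ne'
    field_simp
  have hPd : P.natDegree ≤ n := by
    refine (natDegree_prod_le _ _).trans ?_
    simp
  set P1 := derivative^[n - m] P with hP1
  have hP1s : P1.Splits := splits_iterate_derivative_real hPs _
  have hP1c : ∀ d ≤ m, P1.coeff d =
      ((n - m).factorial * n.choose m : ℝ) * ((m.choose d : ℝ) * smean n (m - d) y) := by
    intro d hd
    rw [hP1, coeff_iterate_derivative, hPc _ (by omega), nsmul_eq_mul]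
    have e1 : n - (d + (n - m)) = m - d := by omega
    rw [e1, Nat.descFactorial_eq_factorial_mul_choose]
    have e2 : (d + (n - m)).choose (n - m) * n.choose (d + (n - m)) = n.choose m * m.choose d := by
      have := Nat.choose_mul (n := n) (k := d + (n - m)) (s := n - m) (by omega)
      rw [mul_comm, this, Nat.choose_symm h]
      congr 2 <;> omega
    have e3 : ((d + (n - m)).choose (n - m) : ℝ) * n.choose (d + (n - m)) =
      n.choose m * m.choose d := by exact_mod_cast e2
    push_cast
    linear_combination ((n-m).factorial * smean n (m - d) y : ℝ) * e3
  have hs0 : smean n 0 y = 1 := by simp [smean, esymmS]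
  have hc1 : ((n - m).factorial * n.choose m : ℝ) ≠ 0 := by
    have := Nat.choose_pos h
    have := Nat.factorial_pos (n - m)
    positivity
  have hP1d : P1.natDegree = m := by
    apply le_antisymm
    · have := natDegree_iterate_derivative P (n - m)
      rw [← hP1] at this
      omega
    · apply le_natDegree_of_ne_zero
      rw [hP1c m le_rfl]
      simpa [hs0] using hc1
  set P2 := P1.reverse with hP2
  have hP2c : ∀ e ≤ m, P2.coeff e =
      ((n - m).factorial * n.choose m : ℝ) * ((m.choose e : ℝ) * smean n e y) := by
    intro e he
    rw [hP2, coeff_reverse, hP1d, revAt_le he, hP1c _ (by omega), Nat.choose_symm he]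
    congr 3
    omega
  have hP2d : P2.natDegree ≤ m := hP1d ▸ reverse_natDegree_le P1
  set P3 := derivative^[j] P2 with hP3
  have hc2 : ((n - m).factorial * n.choose m * (j.factorial * m.choose j) : ℝ) ≠ 0 := by
    have := Nat.choose_pos (show j ≤ m by omega)
    have := Nat.factorial_pos j
    apply mul_ne_zero hc1
    positivity
  refine ⟨C (((n - m).factorial * n.choose m * (j.factorial * m.choose j) : ℝ)⁻¹) * P3, ?_, ?_, ?_⟩
  · exact (Splits.C _).mul (splits_iterate_derivative_real (splits_reverse_real hP1s) _)
  · refine (natDegree_C_mul_le _ _).trans ?_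
    have := natDegree_iterate_derivative P2 j
    rw [← hP3] at this
    omega
  · intro d hd
    rw [coeff_C_mul, hP3, coeff_iterate_derivative, hP2c _ (by omega), nsmul_eq_mul,
      Nat.descFactorial_eq_factorial_mul_choose]
    have e2 : (d + j).choose j * m.choose (d + j) = m.choose j * N.choose d := by
      have := Nat.choose_mul (n := m) (k := d + j) (s := j) (by omega)
      rw [mul_comm, this]
      congr 2 <;> omega
    have e3 : ((d + j).choose j : ℝ) * m.choose (d + j) = m.choose j * N.choose d := by
      exact_mod_cast e2
    rw [inv_mul_eq_iff_eq_mul₀ hc2, add_comm j d]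
    push_cast
    linear_combination ((n-m).factorial * n.choose m * j.factorial * smean n (d + j) y : ℝ) * e3

theorem amgm_point {r g z : ℝ} (hg : 0 < g) :
    (1 + r ^ 2) * (z ^ 2 / g ^ 2) ^ (1 / (1 + r ^ 2)) * g ^ 2 ≤ (g * r) ^ 2 + z ^ 2 := by
  have h := Real.geom_mean_le_arith_mean2_weighted (w₁ := r ^ 2 / (1 + r ^ 2))
    (w₂ := 1 / (1 + r ^ 2)) (p₁ := 1) (p₂ := z ^ 2 / g ^ 2) (by positivity) (by positivity)
    (by norm_num) (by positivity) (by field_simp; ring)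
  rw [Real.one_rpow, one_mul] at h
  calc _ ≤ (1 + r ^ 2) * (r ^ 2 / (1 + r ^ 2) * 1 + 1 / (1 + r ^ 2) * (z ^ 2 / g ^ 2)) * g ^ 2 := by
        gcongr
    _ = _ := by field_simp

theorem prod_lower (s : Multiset ℝ) {r g : ℝ} (hg : 0 < g) :
    ((1 + r ^ 2) * g ^ 2) ^ s.card * ((s.map (fun z => z ^ 2)).prod / (g ^ 2) ^ s.card)
      ^ (1 / (1 + r ^ 2))
      ≤ (s.map (fun z => (g * r) ^ 2 + z ^ 2)).prod := by
  induction s using Multiset.induction with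
  | empty => simp
  | cons a s ih =>
    simp only [Multiset.map_cons, Multiset.prod_cons, Multiset.card_cons]
    have h0 : 0 ≤ (s.map (fun z => z ^ 2)).prod := by
      apply Multiset.prod_nonneg
      intro x hx
      obtain ⟨z, -, rfl⟩ := Multiset.mem_map.1 hx
      positivity
    have e : a ^ 2 * (s.map (fun z => z ^ 2)).prod / (g ^ 2) ^ (s.card + 1) =
      (a ^ 2 / g ^ 2) * ((s.map (fun z => z ^ 2)).prod / (g ^ 2) ^ s.card) := by
      field_simp
      ring
    rw [e, Real.mul_rpow (by positivity) (by positivity)]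
    have := mul_le_mul (amgm_point (z := a) (r := r) hg) ih (by positivity) (by positivity)
    refine le_trans (le_of_eq ?_) this
    ring

open Polynomial in
theorem core_ineq (n : ℕ) (y : Fin n → ℝ) (j N : ℕ) (h : j + N ≤ n)
    (hm : smean n (j + N) y ≠ 0) (g : ℝ) (hg : 0 < g)
    (hjg : |smean n j y| = |smean n (j + N) y| * g ^ N) (r : ℝ) (hr : 0 ≤ r) :
    |smean n j y| * √(1 + r ^ 2) ^ N ≤
      ∑ i ∈ range (N + 1), (N.choose i : ℝ) * |smean n (j + i) y| * (g * r) ^ i := by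
  obtain ⟨Q, hQs, hQd, hQc⟩ := exists_window_poly n y j N h
  have hlead : Q.coeff N = smean n (j + N) y := by rw [hQc N le_rfl]; simp
  have hdeg : Q.natDegree = N := le_antisymm hQd (le_natDegree_of_ne_zero (by rwa [hlead]))
  have hlc : Q.leadingCoeff = smean n (j + N) y := by rw [leadingCoeff, hdeg, hlead]
  have hcard : Q.roots.card = N := by rw [← hQs.natDegree_eq_card_roots, hdeg]
  have h0 : Q.coeff 0 = smean n j y := by rw [hQc 0 (Nat.zero_le _)]; simp
  set z : ℂ := ((g * r : ℝ) : ℂ) * Complex.I with hz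
  have hznorm : ‖z‖ = g * r := by
    rw [hz, norm_mul, Complex.norm_I, mul_one, Complex.norm_real, Real.norm_of_nonneg (by positivity)]
  -- upper bound
  have hup : ‖aeval z Q‖ ≤ ∑ i ∈ range (N + 1), (N.choose i : ℝ) * |smean n (j + i) y| * (g * r) ^ i := by
    rw [aeval_eq_sum_range, hdeg]
    refine (norm_sum_le _ _).trans (sum_le_sum fun i hi => ?_)
    rw [norm_smul, norm_pow, hznorm, hQc i (by simpa [Nat.lt_succ_iff] using hi), Real.norm_eq_abs,
      abs_mul, abs_of_nonneg (Nat.cast_nonneg _)]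
  refine le_trans ?_ hup
  have hev : aeval z Q = (smean n (j + N) y : ℂ) * (Q.roots.map (fun x : ℝ => z - (x : ℂ))).prod := by
    conv_lhs => rw [hQs.eq_prod_roots]
    rw [hlc, map_mul, map_multiset_prod, Multiset.map_map]
    simp
  have hn2 : ‖aeval z Q‖ ^ 2 = |smean n (j + N) y| ^ 2 *
      (Q.roots.map (fun x => (g * r) ^ 2 + x ^ 2)).prod := by
    rw [hev, norm_mul, mul_pow, Complex.norm_real, Real.norm_eq_abs]
    congr 1
    generalize Q.roots = s
    induction s using Multiset.induction with
    | empty => simp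
    | cons a s ih =>
      have e : ‖z - (a : ℂ)‖ ^ 2 = (g * r) ^ 2 + a ^ 2 := by
        rw [← Complex.normSq_eq_norm_sq, Complex.normSq_apply]
        simp [hz]
        ring
      rw [Multiset.map_cons, Multiset.prod_cons, norm_mul, mul_pow, ih, e, Multiset.map_cons,
        Multiset.prod_cons]
  have hz2 : (Q.roots.map (fun x => x ^ 2)).prod = (g ^ 2) ^ N := by
    have h1 := hQs.coeff_zero_eq_leadingCoeff_mul_prod_roots
    rw [h0, hlc] at h1
    have h2 : |smean n j y| = |smean n (j + N) y| * |Q.roots.prod| := by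
      rw [h1]; simp [abs_mul]
    have h3 : |Q.roots.prod| = g ^ N := by
      have : |smean n (j + N) y| ≠ 0 := abs_ne_zero.2 hm
      apply mul_left_cancel₀ this
      rw [← h2, hjg]
    rw [Multiset.prod_map_pow, Multiset.map_id', ← sq_abs, h3]
    ring
  have hlow := prod_lower Q.roots (r := r) hg
  rw [hz2, hcard, div_self (by positivity), Real.one_rpow, mul_one] at hlow
  refine (sq_le_sq₀ (by positivity) (norm_nonneg _)).1 ?_
  rw [hn2, hjg, mul_pow, mul_pow, mul_assoc]
  gcongr
  refine le_trans (le_of_eq ?_) hlow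
  rw [← pow_mul (√_), mul_comm N 2, pow_mul, Real.sq_sqrt (by positivity)]
  rw [mul_pow, mul_comm]
  ring

theorem pow_self_le (i : ℕ) : (i : ℝ) ^ i / i.factorial ≤ 3 ^ i := by
  have h := Real.pow_div_factorial_le_exp (i : ℝ) (Nat.cast_nonneg _) i
  refine h.trans ?_
  rw [← Real.exp_one_pow]
  gcongr
  exact Real.exp_one_lt_three.le

theorem choose_le (N i : ℕ) : (N.choose i : ℝ) ≤ (N : ℝ) ^ i / i.factorial :=
  Nat.choose_le_pow_div i N

theorem growth (a N : ℕ) (ha : 2 ≤ a) (haN : a ≤ N) :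
    exp ((1 / 2000 : ℝ) ^ 2 * a / 4) ≤ √(1 + (1 / 2000 * √(a / N)) ^ 2) ^ N := by
  have hN : (0 : ℝ) < N := by exact_mod_cast (by omega : 0 < N)
  have haN' : (a : ℝ) / N ≤ 1 := by rw [div_le_one hN]; exact_mod_cast haN
  have h0 : 0 ≤ (a : ℝ) / N := by positivity
  set w := (1 / 2000 * √((a : ℝ) / N)) ^ 2 with hw
  have hw' : w = (1 / 2000 : ℝ) ^ 2 * (a / N) := by rw [hw, mul_pow, Real.sq_sqrt h0]
  have hw0 : 0 ≤ w := by positivity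
  have hw1 : w ≤ 1 := by rw [hw']; nlinarith
  have e1 : exp (w / 2) ≤ 1 + w := by
    have h1 := Real.add_one_le_exp (-(w / 2))
    have h2 : exp (w / 2) * exp (-(w / 2)) = 1 := by rw [← Real.exp_add]; simp
    have h3 := Real.exp_pos (w / 2)
    nlinarith
  have e2 : exp (w / 4) ≤ √(1 + w) := by
    apply Real.le_sqrt_of_sq_le
    rw [← Real.exp_nat_mul]
    refine le_trans (le_of_eq ?_) e1
    congr 1; push_cast; ring
  calc exp ((1 / 2000 : ℝ) ^ 2 * a / 4) = exp (w / 4) ^ N := by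
        rw [← Real.exp_nat_mul, hw']
        congr 1
        field_simp
    _ ≤ _ := by gcongr

theorem final_numeric (a : ℕ) (ha : 2 ≤ a) :
    exp ((1 / 16000 : ℝ) * (1 / 2000) * a) + 16 * (3 / 2000 : ℝ) ^ 3 <
      exp ((1 / 2000 : ℝ) ^ 2 * a / 4) := by
  have ha' : (2 : ℝ) ≤ a := by exact_mod_cast ha
  set z := (1 / 16000 : ℝ) * (1 / 2000) * a with hz
  have e : exp ((1 / 2000 : ℝ) ^ 2 * a / 4) = exp z ^ 2 := by
    rw [← Real.exp_nat_mul]; congr 1; rw [hz]; push_cast; ring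
  rw [e]
  have hz' : (1 / 16000 : ℝ) * (1 / 2000) * 2 ≤ z := by rw [hz]; gcongr
  have h1 := Real.add_one_le_exp z
  nlinarith

/-- The window inequality, as an abstract hypothesis on a sequence. -/
def WindowIneq (ℓ : ℕ) (t : ℕ → ℝ) : Prop :=
  ∀ j N : ℕ, j + N ≤ ℓ → 0 < t (j + N) → ∀ g : ℝ, 0 < g → t j = t (j + N) * g ^ N →
    ∀ r : ℝ, 0 ≤ r → t j * √(1 + r ^ 2) ^ N ≤
      ∑ i ∈ range (N + 1), (N.choose i : ℝ) * t (j + i) * (g * r) ^ i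

/-- Contradiction in a window. -/
theorem window_contra (ℓ : ℕ) (t : ℕ → ℝ) (ht : ∀ i, 0 ≤ t i) (H : WindowIneq ℓ t)
    (j a N : ℕ) (ha : 2 ≤ a) (haN : a ≤ N) (hNℓ : j + N ≤ ℓ) (htj : 0 < t j)
    (Λ : ℝ) (hΛ : 1 ≤ Λ)
    (hleft : ∀ i ≤ a, t (j + i) ≤ t j * ((1 / 16000) * √a) ^ i)
    (hright : ∀ i, a < i → i ≤ N → t (j + i) ≤ t j * (Λ * √i) ^ i)
    (hN : t (j + N) = t j * (Λ * √N) ^ N) : False := by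
  have hN0 : (0 : ℝ) < N := by exact_mod_cast (by omega : 0 < N)
  have hsN : 0 < √(N : ℝ) := Real.sqrt_pos.2 hN0
  have hΛ0 : 0 < Λ := by linarith
  have key := H j N hNℓ (by rw [hN]; positivity) (1 / (Λ * √N)) (by positivity)
    (by rw [hN, mul_assoc, ← mul_pow, mul_one_div_cancel (by positivity)]; simp)
    (1 / 2000 * √(a / N)) (by positivity)
  have hgr : 1 / (Λ * √N) * (1 / 2000 * √(a / N)) = (1 / 2000) * √a / (Λ * N) := by
    rw [Real.sqrt_div (Nat.cast_nonneg _)]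
    field_simp
    rw [Real.sq_sqrt hN0.le]
  rw [hgr] at key
  have hterm : ∀ i ∈ range (N + 1), (N.choose i : ℝ) * t (j + i) * ((1 / 2000) * √a / (Λ * N)) ^ i
      ≤ t j * (((1 / 16000 : ℝ) * (1 / 2000) * a) ^ i / i.factorial
        + 8 * (3 / 2000 : ℝ) ^ 3 * (1 / 2) ^ i) := by
    intro i hi
    have hiN : i ≤ N := by simpa [Nat.lt_succ_iff] using hi
    have hf : (0 : ℝ) < i.factorial := by exact_mod_cast i.factorial_pos
    rcases le_or_gt i a with hia | hia
    · calc (N.choose i : ℝ) * t (j + i) * ((1 / 2000) * √a / (Λ * N)) ^ i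
          ≤ ((N : ℝ) ^ i / i.factorial) * (t j * ((1 / 16000) * √a) ^ i)
            * ((1 / 2000) * √a / (1 * N)) ^ i := by
            have := ht (j + i)
            gcongr
            · exact choose_le N i
            · exact hleft i hia
        _ = t j * ((N * ((1 / 16000) * √a) * ((1 / 2000) * √a / (1 * N))) ^ i / i.factorial) := by
            rw [mul_pow, mul_pow]; ring
        _ = t j * (((1 / 16000 : ℝ) * (1 / 2000) * a) ^ i / i.factorial) := by
            congr 3
            field_simp
            rw [Real.sq_sqrt (Nat.cast_nonneg _)]
        _ ≤ _ := by
            gcongr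
            have : 0 ≤ 8 * (3 / 2000 : ℝ) ^ 3 * (1 / 2) ^ i := by positivity
            linarith
    · calc (N.choose i : ℝ) * t (j + i) * ((1 / 2000) * √a / (Λ * N)) ^ i
          ≤ ((N : ℝ) ^ i / i.factorial) * (t j * (Λ * √i) ^ i)
            * ((1 / 2000) * √i / (Λ * N)) ^ i := by
            have := ht (j + i)
            gcongr
            · exact choose_le N i
            · exact hright i hia hiN
        _ = t j * ((N * (Λ * √i) * ((1 / 2000) * √i / (Λ * N))) ^ i / i.factorial) := by
            rw [mul_pow (_ * _) (_ / _), mul_pow (N : ℝ)]; ring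
        _ = t j * ((1 / 2000) ^ i * ((i : ℝ) ^ i / i.factorial)) := by
            rw [← mul_div_assoc ((1 / 2000 : ℝ) ^ i), ← mul_pow]
            congr 3
            field_simp
            rw [Real.sq_sqrt (Nat.cast_nonneg _)]
        _ ≤ t j * ((1 / 2000) ^ i * 3 ^ i) := by
            gcongr
            exact pow_self_le i
        _ = t j * ((3 / 2000) ^ 3 * (3 / 2000 : ℝ) ^ (i - 3)) := by
            rw [← mul_pow, ← pow_add, show 3 + (i - 3) = i by omega]; norm_num
        _ ≤ t j * ((3 / 2000) ^ 3 * (1 / 2 : ℝ) ^ (i - 3)) := by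
            gcongr ?_ * (_ * ?_ ^ _)
            norm_num
        _ = t j * (8 * (3 / 2000 : ℝ) ^ 3 * (1 / 2) ^ i) := by
            obtain ⟨d, rfl⟩ : ∃ d, i = d + 3 := ⟨i - 3, by omega⟩
            rw [Nat.add_sub_cancel, pow_add (1 / 2 : ℝ)]; ring
        _ ≤ _ := by
            gcongr
            have : 0 ≤ ((1 / 16000 : ℝ) * (1 / 2000) * a) ^ i / i.factorial := by positivity
            linarith
  have hsum := key.trans (sum_le_sum hterm)
  rw [← mul_sum, sum_add_distrib, ← mul_sum] at hsum
  have h1 := le_of_mul_le_mul_left hsum htj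
  have h2 := Real.sum_le_exp_of_nonneg (x := (1 / 16000 : ℝ) * (1 / 2000) * a) (by positivity) (N + 1)
  have h3 : ∑ i ∈ range (N + 1), (1 / 2 : ℝ) ^ i ≤ 2 := by
    have := geom_sum_eq (x := (1 / 2 : ℝ)) (by norm_num) (N + 1)
    rw [this]
    have : 0 < (1 / 2 : ℝ) ^ (N + 1) := by positivity
    rw [div_le_iff_of_neg (by norm_num)]
    linarith
  have h4 := growth a N ha haN
  have h5 := final_numeric a ha
  have h6 : 8 * (3 / 2000 : ℝ) ^ 3 * ∑ i ∈ range (N + 1), (1 / 2 : ℝ) ^ i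
      ≤ 8 * (3 / 2000 : ℝ) ^ 3 * 2 := by gcongr
  linarith

theorem stage_two (k ℓ : ℕ) (hkℓ : k + 2 ≤ ℓ) (t : ℕ → ℝ) (ht : ∀ i, 0 ≤ t i)
    (H : WindowIneq ℓ t)
    (hle : ∀ j ≤ k + 1, t j ≤ √((k + 1 : ℕ) : ℝ) ^ j)
    (heq : ∃ j ≤ k + 1, t j = √((k + 1 : ℕ) : ℝ) ^ j)
    (hℓ : t ℓ = √(ℓ : ℝ) ^ ℓ) :
    ∃ j, (j = k ∨ j = k + 1) ∧ √((k + 1).descFactorial j : ℝ) * (1 / 16000) ^ j ≤ t j := by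
  set K := k + 1 with hK
  set w : ℕ → ℝ := fun j => √(K.descFactorial j : ℝ) * (1 / 16000) ^ j with hw
  have hwpos : ∀ j ≤ K, 0 < w j := by
    intro j hj
    have : (0 : ℝ) < K.descFactorial j := by exact_mod_cast Nat.descFactorial_pos.2 hj
    have := Real.sqrt_pos.2 this
    simp only [hw]; positivity
  obtain ⟨j, hj, hjmax⟩ := exists_max_image (range (K + 1)) (fun j => t j / w j) ⟨0, by simp⟩
  have hjK : j ≤ K := by simpa [Nat.lt_succ_iff] using hj
  have hwj := hwpos j hjK
  have hmax : ∀ i ≤ K, t i * w j ≤ t j * w i := by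
    intro i hi
    have := hjmax i (by simpa [Nat.lt_succ_iff] using hi)
    rwa [div_le_div_iff₀ (hwpos i hi) hwj] at this
  have hbig : w j ≤ t j := by
    obtain ⟨j0, hj0, e0⟩ := heq
    have h1 := hmax j0 hj0
    have h2 : w j0 ≤ t j0 := by
      rw [e0]
      simp only [hw]
      calc √(K.descFactorial j0 : ℝ) * (1 / 16000) ^ j0 ≤ √((K : ℝ) ^ j0) * 1 := by
            gcongr
            · exact_mod_cast Nat.descFactorial_le_pow K j0
            · apply pow_le_one₀ <;> norm_num
        _ = _ := by
            rw [mul_one]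
            apply (Real.sqrt_eq_iff_mul_self_eq (by positivity) (by positivity)).2
            rw [← mul_pow, Real.mul_self_sqrt (Nat.cast_nonneg _)]
    have h3 := hwpos j0 hj0
    have h4 : w j * w j0 ≤ t j * w j0 := by
      calc w j * w j0 ≤ w j * t j0 := by gcongr
        _ = t j0 * w j := mul_comm _ _
        _ ≤ _ := h1
    exact le_of_mul_le_mul_right h4 h3
  by_cases hjk : k ≤ j
  · exact ⟨j, by omega, hbig⟩
  exfalso
  have htj : 0 < t j := hwj.trans_le hbig
  obtain ⟨m, hm, hmmax⟩ := exists_max_image (Icc (K + 1) ℓ)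
    (fun m => (t m / t j) ^ (1 / ((m - j : ℕ) : ℝ)) / √((m - j : ℕ) : ℝ)) ⟨ℓ, by simp; omega⟩
  set Λ := (t m / t j) ^ (1 / ((m - j : ℕ) : ℝ)) / √((m - j : ℕ) : ℝ) with hΛ
  rw [mem_Icc] at hm
  have hroot : ∀ m', K + 1 ≤ m' →
      t m' = t j * ((t m' / t j) ^ (1 / ((m' - j : ℕ) : ℝ)) / √((m' - j : ℕ) : ℝ)
        * √((m' - j : ℕ) : ℝ)) ^ (m' - j) := by
    intro m' hm'
    have h1 : (0 : ℝ) < ((m' - j : ℕ) : ℝ) := by exact_mod_cast (by omega : 0 < m' - j)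
    have h2 := Real.sqrt_pos.2 h1
    rw [div_mul_cancel₀ _ h2.ne', one_div, Real.rpow_inv_natCast_pow (div_nonneg (ht _) htj.le)
      (by omega)]
    field_simp
  have hΛ1 : 1 ≤ Λ := by
    refine le_trans ?_ (hmmax ℓ (by simp; omega))
    have h1 : (0 : ℝ) < ((ℓ - j : ℕ) : ℝ) := by exact_mod_cast (by omega : 0 < ℓ - j)
    rw [one_le_div (Real.sqrt_pos.2 h1), one_div,
      Real.le_rpow_inv_iff_of_pos (by positivity) (div_nonneg (ht _) htj.le) h1, Real.rpow_natCast,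
      le_div_iff₀ htj, hℓ]
    calc √((ℓ - j : ℕ) : ℝ) ^ (ℓ - j) * t j ≤ √(ℓ : ℝ) ^ (ℓ - j) * √(ℓ : ℝ) ^ j := by
          gcongr
          · omega
          · refine (hle j hjK).trans ?_
            gcongr
            omega
      _ = _ := by rw [← pow_add]; congr 1; omega
  refine window_contra ℓ t ht H j (K - j) (m - j) (by omega) (by omega) (by omega) htj Λ hΛ1 ?_ ?_ ?_
  · intro i hi
    have h1 := hmax (j + i) (by omega)
    rw [← mul_le_mul_iff_left₀ hwj]
    refine h1.trans ?_
    rw [mul_assoc]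
    gcongr
    simp only [hw]
    have e : K.descFactorial (j + i) = K.descFactorial j * (K - j).descFactorial i := by
      have := Nat.descFactorial_mul_descFactorial (n := K) (m := j + i) (k := j) (by omega)
      rw [← this, Nat.add_sub_cancel_left, mul_comm]
    have e2 : √((K - j).descFactorial i : ℝ) ≤ √((K - j : ℕ) : ℝ) ^ i := by
      apply Real.sqrt_le_iff.2
      refine ⟨by positivity, ?_⟩
      rw [← pow_mul, mul_comm, pow_mul, Real.sq_sqrt (Nat.cast_nonneg _)]
      exact_mod_cast Nat.descFactorial_le_pow _ i
    rw [e, Nat.cast_mul, Real.sqrt_mul (Nat.cast_nonneg _), pow_add, mul_pow]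
    calc √(K.descFactorial j : ℝ) * √((K - j).descFactorial i : ℝ) * ((1 / 16000) ^ j * (1 / 16000) ^ i)
        ≤ √(K.descFactorial j : ℝ) * √((K - j : ℕ) : ℝ) ^ i * ((1 / 16000) ^ j * (1 / 16000) ^ i) := by
          gcongr
      _ = _ := by ring
  · intro i hi1 hi2
    have h1 := hmmax (j + i) (by simp; omega)
    have h2 := hroot (j + i) (by omega)
    rw [Nat.add_sub_cancel_left] at h1 h2
    rw [h2]
    have := htj.le
    have h3 : 0 ≤ (t (j + i) / t j) ^ (1 / (i : ℝ)) :=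
      Real.rpow_nonneg (div_nonneg (ht _) htj.le) _
    gcongr
  · rw [show j + (m - j) = m by omega]
    exact hroot m hm.1

theorem factorial_lower (k j : ℕ) (hk : 1 ≤ k) (hj : j = k ∨ j = k + 1) :
    (√((k + 1 : ℕ) : ℝ) / 3) ^ j ≤ √((k + 1).descFactorial j : ℝ) := by
  have e : (k + 1).descFactorial j = (k + 1).factorial := by
    rcases hj with rfl | rfl
    · rw [Nat.factorial_succ, Nat.descFactorial_eq_div (by omega)]
      simp [Nat.factorial_succ]
    · exact Nat.descFactorial_self _
  rw [e]
  apply Real.le_sqrt_of_sq_le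
  rw [← pow_mul, mul_comm, pow_mul, div_pow, Real.sq_sqrt (Nat.cast_nonneg _)]
  have h := pow_self_le (k + 1)
  have hf : (0 : ℝ) < (k + 1).factorial := by exact_mod_cast (k + 1).factorial_pos
  rw [div_le_iff₀ hf] at h
  have hK1 : (1 : ℝ) ≤ ((k + 1 : ℕ) : ℝ) := by push_cast; linarith [Nat.cast_nonneg (α := ℝ) k]
  set x := ((k + 1 : ℕ) : ℝ) with hx
  have h9 : (x / 3 ^ 2) ^ j * (3 : ℝ) ^ (k + 1) ≤ x ^ (k + 1) := by
    rcases hj with rfl | rfl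
    · rw [div_pow, ← pow_mul, div_mul_eq_mul_div, div_le_iff₀ (by positivity)]
      have : x ^ j ≤ x ^ (j + 1) := pow_le_pow_right₀ hK1 (by omega)
      have h3 : (3 : ℝ) ^ (j + 1) ≤ 3 ^ (2 * j) := pow_le_pow_right₀ (by norm_num) (by omega)
      gcongr
    · rw [← mul_pow]
      gcongr
      linarith
  have h3 : (0 : ℝ) < 3 ^ (k + 1) := by positivity
  have h10 : (x / 3 ^ 2) ^ j * (3 : ℝ) ^ (k + 1) ≤ (k + 1).factorial * 3 ^ (k + 1) := by
    linarith
  exact le_of_mul_le_mul_right h10 h3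

theorem WindowIneq.scale {ℓ : ℕ} {S : ℕ → ℝ} (H : WindowIneq ℓ S) {c τ : ℝ} (hc : 0 < c)
    (hτ : 0 < τ) : WindowIneq ℓ (fun m => c * τ ^ m * S m) := by
  intro j N hjN hpos g hg hj r hr
  beta_reduce at hpos hj ⊢
  have hcj : 0 < c * τ ^ j := by positivity
  have hcjN : 0 < c * τ ^ (j + N) := by positivity
  have h1 : 0 < S (j + N) := (mul_pos_iff_of_pos_left hcjN).1 hpos
  have h2 : S j = S (j + N) * (τ * g) ^ N := by
    apply mul_left_cancel₀ hcj.ne'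
    rw [hj, mul_pow, pow_add]; ring
  have h3 := H j N hjN h1 (τ * g) (by positivity) h2 r hr
  have h4 := mul_le_mul_of_nonneg_left h3 hcj.le
  calc c * τ ^ j * S j * √(1 + r ^ 2) ^ N = c * τ ^ j * (S j * √(1 + r ^ 2) ^ N) := by ring
    _ ≤ _ := h4
    _ = _ := by
      rw [mul_sum]
      apply sum_congr rfl
      intro i _
      rw [pow_add, mul_assoc τ g r, mul_pow τ (g * r)]
      ring

theorem stage_one (k ℓ : ℕ) (hk : 1 ≤ k) (hkℓ : k + 2 ≤ ℓ) (S : ℕ → ℝ) (hS : ∀ i, 0 ≤ S i)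
    (H : WindowIneq ℓ S) (hS0 : S 0 = 1) (hSℓ : 0 < S ℓ) :
    ∃ j, (j = k ∨ j = k + 1) ∧
      S ℓ ^ ((1 : ℝ) / ℓ) / √ℓ * (√((k + 1 : ℕ) : ℝ) / 48000) ≤ S j ^ ((1 : ℝ) / j) := by
  set K := k + 1 with hK
  have hℓ0 : (0 : ℝ) < ℓ := by exact_mod_cast (by omega : 0 < ℓ)
  have hsℓ : 0 < √(ℓ : ℝ) := Real.sqrt_pos.2 hℓ0
  have hK0 : (0 : ℝ) < K := by exact_mod_cast (by omega : 0 < K)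
  have hsK : 0 < √(K : ℝ) := Real.sqrt_pos.2 hK0
  set B := S ℓ / √(ℓ : ℝ) ^ ℓ with hB
  have hB0 : 0 < B := by positivity
  set b : ℕ → ℝ := fun j => S j / √(K : ℝ) ^ j with hb
  obtain ⟨j0, hj0, hmin⟩ := exists_min_image ((range (K + 1)).filter (fun j => 0 < S j))
    (fun j => (B / b j) ^ (1 / ((ℓ - j : ℕ) : ℝ))) ⟨0, by simp [hS0]⟩
  rw [mem_filter, mem_range, Nat.lt_succ_iff] at hj0
  obtain ⟨hj0K, hSj0⟩ := hj0
  have hb0 : ∀ j, 0 < S j → 0 < b j := fun j hj => by simp only [hb]; positivity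
  set σ := (B / b j0) ^ (1 / ((ℓ - j0 : ℕ) : ℝ)) with hσ
  have hσ0 : 0 < σ := Real.rpow_pos_of_pos (div_pos hB0 (hb0 _ hSj0)) _
  have hσeq : σ ^ (ℓ - j0) * b j0 = B := by
    rw [hσ, one_div, Real.rpow_inv_natCast_pow (div_pos hB0 (hb0 _ hSj0)).le (by omega)]
    have := hb0 _ hSj0
    field_simp
  have hσle : ∀ j ≤ K, σ ^ (ℓ - j) * b j ≤ B := by
    intro j hj
    rcases (hS j).eq_or_lt with h | h
    · simp only [hb, ← h]; simp [hB0.le]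
    · have h1 := hmin j (by simp [h, Nat.lt_succ_iff, hj])
      have h2 := hb0 _ h
      have h3 : σ ^ (ℓ - j) ≤ B / b j := by
        rw [← Real.rpow_inv_natCast_pow (div_pos hB0 h2).le (show ℓ - j ≠ 0 by omega), ← one_div]
        gcongr
      rwa [le_div_iff₀ h2] at h3
  have hσB : σ ^ ℓ ≤ B := by simpa [hb, hS0] using hσle 0 (by omega)
  have hc : 0 < σ ^ ℓ / B := by positivity
  set t : ℕ → ℝ := fun m => σ ^ ℓ / B * σ⁻¹ ^ m * S m with ht
  have htb : ∀ j ≤ K, t j = σ ^ (ℓ - j) * b j / B * √(K : ℝ) ^ j := by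
    intro j hj
    simp only [ht, hb, inv_pow]
    have : σ ^ ℓ = σ ^ (ℓ - j) * σ ^ j := by rw [← pow_add]; congr 1; omega
    rw [this]
    field_simp
  obtain ⟨j, hjk, hj⟩ := stage_two k ℓ hkℓ t (fun i => by have := hS i; simp only [ht]; positivity)
    (H.scale hc (inv_pos.2 hσ0))
    (fun j hj => by
      rw [htb j hj]
      have : σ ^ (ℓ - j) * b j / B ≤ 1 := (div_le_one hB0).2 (hσle j hj)
      exact mul_le_of_le_one_left (by positivity) this)
    ⟨j0, hj0K, by rw [htb j0 hj0K, hσeq, div_self hB0.ne', one_mul]⟩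
    (by simp only [ht, hB, inv_pow]; field_simp)
  refine ⟨j, hjk, ?_⟩
  have hj1 : 1 ≤ j := by omega
  have hjℓ : j ≤ ℓ := by omega
  have h1 := factorial_lower k j hk hjk
  have h2 : (√(K : ℝ) / 48000) ^ j ≤ t j := by
    refine le_trans ?_ hj
    calc (√(K : ℝ) / 48000) ^ j = (√(K : ℝ) / 3) ^ j * (1 / 16000) ^ j := by
          rw [← mul_pow]; congr 1; ring
      _ ≤ _ := by gcongr
  set τ := S ℓ ^ ((1 : ℝ) / ℓ) / √ℓ with hτ
  have hτ0 : 0 < τ := by positivity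
  have hτB : τ ^ ℓ = B := by
    rw [hτ, div_pow, one_div, Real.rpow_inv_natCast_pow hSℓ.le (by omega)]
  have hστ : σ ≤ τ := by
    rw [← hτB] at hσB
    exact le_of_pow_le_pow_left₀ (by omega) hτ0.le hσB
  have h3 : (τ * (√(K : ℝ) / 48000)) ^ j ≤ S j := by
    have e1 : t j * B = σ ^ (ℓ - j) * S j := by
      simp only [ht, inv_pow]
      have : σ ^ ℓ = σ ^ (ℓ - j) * σ ^ j := by rw [← pow_add]; congr 1; omega
      rw [this]
      field_simp
    have e2 : B = τ ^ (ℓ - j) * τ ^ j := by rw [← hτB, ← pow_add]; congr 1; omega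
    have hp : 0 < σ ^ (ℓ - j) := by positivity
    refine le_of_mul_le_mul_left ?_ hp
    rw [← e1, e2, mul_pow]
    calc σ ^ (ℓ - j) * (τ ^ j * (√(K : ℝ) / 48000) ^ j)
        ≤ τ ^ (ℓ - j) * (τ ^ j * t j) := by gcongr
      _ = _ := by ring
  rw [one_div, Real.le_rpow_inv_iff_of_pos (by positivity) (hS j)
    (by exact_mod_cast (by omega : 0 < j)), Real.rpow_natCast]
  exact h3

theorem maclaurin_type_inequality_explicit :
    ∀ (n : ℕ), 1 ≤ n → ∀ (y : Fin n → ℝ) (k ℓ : ℕ),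
      1 ≤ k → k < ℓ → ℓ ≤ n →
      |smean n ℓ y| ^ ((1 : ℝ) / ℓ) ≤
        160 * Real.exp 7 *
          max (((ℓ : ℝ) / k) ^ ((1 : ℝ) / 2) * |smean n k y| ^ ((1 : ℝ) / k))
            (((ℓ : ℝ) / (k + 1)) ^ ((1 : ℝ) / 2) * |smean n (k + 1) y| ^ ((1 : ℝ) / (k + 1))) := by
  intro n _ y k ℓ hk hkℓ hℓn
  have hC : (48000 : ℝ) ≤ 160 * Real.exp 7 := by
    have h1 := Real.exp_one_gt_d9
    have h2 : Real.exp 7 = Real.exp 1 ^ 7 := by rw [← Real.exp_nat_mul]; norm_num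
    have h3 : (2.5 : ℝ) ^ 7 ≤ Real.exp 1 ^ 7 := by gcongr; linarith
    rw [h2]
    norm_num at h3 ⊢
    linarith
  have hk0 : (0 : ℝ) < k := by exact_mod_cast hk
  have hℓ0 : (0 : ℝ) < ℓ := by exact_mod_cast (by omega : 0 < ℓ)
  -- it suffices to bound by one of the two terms
  have hred : ∀ j, (j = k ∨ j = k + 1) →
      |smean n ℓ y| ^ ((1 : ℝ) / ℓ) ≤
        160 * Real.exp 7 * (((ℓ : ℝ) / j) ^ ((1 : ℝ) / 2) * |smean n j y| ^ ((1 : ℝ) / j)) →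
      |smean n ℓ y| ^ ((1 : ℝ) / ℓ) ≤
        160 * Real.exp 7 *
          max (((ℓ : ℝ) / k) ^ ((1 : ℝ) / 2) * |smean n k y| ^ ((1 : ℝ) / k))
            (((ℓ : ℝ) / (k + 1)) ^ ((1 : ℝ) / 2) * |smean n (k + 1) y| ^ ((1 : ℝ) / (k + 1))) := by
    intro j hj h
    refine h.trans ?_
    gcongr
    rcases hj with rfl | rfl
    · exact le_max_left _ _
    · push_cast
      exact le_max_right _ _
  by_cases hs : smean n ℓ y = 0
  · rw [hs, abs_zero, Real.zero_rpow (by positivity)]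
    positivity
  rcases Nat.lt_or_ge (k + 1) ℓ with hlt | hge
  · obtain ⟨j, hj, h⟩ := stage_one k ℓ hk hlt (fun m => |smean n m y|) (fun _ => abs_nonneg _)
      (fun j N hjN hpos g hg hjg r hr =>
        core_ineq n y j N (by omega) (abs_pos.1 hpos) g hg hjg r hr)
      (by simp [smean, esymmS]) (abs_pos.2 hs)
    apply hred j hj
    have hj0 : (0 : ℝ) < j := by exact_mod_cast (by omega : 0 < j)
    have hjK : √(j : ℝ) ≤ √((k + 1 : ℕ) : ℝ) := by
      apply Real.sqrt_le_sqrt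
      exact_mod_cast (by omega : j ≤ k + 1)
    have hsj := Real.sqrt_pos.2 hj0
    have hsℓ := Real.sqrt_pos.2 hℓ0
    rw [← Real.sqrt_eq_rpow, Real.sqrt_div hℓ0.le]
    set A := |smean n ℓ y| ^ ((1 : ℝ) / ℓ) with hA
    have hA0 : 0 ≤ A := by positivity
    calc A = 48000 * (√(ℓ : ℝ) / √(j : ℝ) * (A / √ℓ * (√(j : ℝ) / 48000))) := by
          field_simp
      _ ≤ 48000 * (√(ℓ : ℝ) / √(j : ℝ) * (A / √ℓ * (√((k + 1 : ℕ) : ℝ) / 48000))) := by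
          gcongr
      _ ≤ 160 * Real.exp 7 * (√(ℓ : ℝ) / √(j : ℝ) * |smean n j y| ^ ((1 : ℝ) / j)) := by
          gcongr
  · have e : ℓ = k + 1 := by omega
    apply hred ℓ (Or.inr e)
    rw [div_self hℓ0.ne', Real.one_rpow, one_mul]
    exact le_mul_of_one_le_left (by positivity) (by linarith)
end

section
/- For every n ≥ 1, all real numbers y_1, …, y_n, every real r > 0, and every integer 1 ≤ ℓ ≤ n, one has Σ_{m=0}^{ℓ} binom(ℓ,m) · |s_m(y)| · r^m ≥ (1 + |s_ℓ(y)|^(2/ℓ) · r^2)^(ℓ/2). -/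
open Finset Real

/-- Superadditivity of the geometric mean, in the form needed here. -/
lemma aux_geom (n : ℕ) (hn : 1 ≤ n) (a : Fin n → ℝ) (ha : ∀ i, 0 ≤ a i) :
    1 + (∏ i, a i) ^ (1 / (n : ℝ)) ≤ (∏ i, (1 + a i)) ^ (1 / (n : ℝ)) := by
  have hn0 : (n : ℝ) ≠ 0 := by positivity
  have hw : ∑ _i : Fin n, (1 / (n : ℝ)) = 1 := by simp [hn0]
  have hp : ∀ i, 0 < 1 + a i := fun i => by linarith [ha i]
  have h1 := Real.geom_mean_le_arith_mean_weighted univ (fun _ : Fin n => 1 / (n : ℝ))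
    (fun i => 1 / (1 + a i)) (fun i _ => by positivity) hw
    (fun i _ => div_nonneg zero_le_one (hp i).le)
  have h2 := Real.geom_mean_le_arith_mean_weighted univ (fun _ : Fin n => 1 / (n : ℝ))
    (fun i => a i / (1 + a i)) (fun i _ => by positivity) hw
    (fun i _ => div_nonneg (ha i) (hp i).le)
  have h3 : ∑ i, 1 / (n : ℝ) * (1 / (1 + a i)) + ∑ i, 1 / (n : ℝ) * (a i / (1 + a i)) = 1 := by
    rw [← Finset.sum_add_distrib]
    refine Eq.trans ?_ hw
    refine Finset.sum_congr rfl fun i _ => ?_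
    have := (hp i).ne'
    field_simp
  have hA : 0 ≤ ∏ i, a i := Finset.prod_nonneg fun i _ => ha i
  have hB : 0 < ∏ i, (1 + a i) := Finset.prod_pos fun i _ => hp i
  have hG : 0 < (∏ i, (1 + a i)) ^ (1 / (n : ℝ)) := Real.rpow_pos_of_pos hB _
  rw [Real.finsetProd_rpow _ _ (fun i _ => div_nonneg zero_le_one (hp i).le),
    Finset.prod_div_distrib, Finset.prod_const_one, Real.div_rpow zero_le_one hB.le,
    Real.one_rpow] at h1
  rw [Real.finsetProd_rpow _ _ (fun i _ => div_nonneg (ha i) (hp i).le),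
    Finset.prod_div_distrib, Real.div_rpow hA hB.le] at h2
  have h4 := (add_le_add h1 h2).trans h3.le
  rwa [← add_div, div_le_one hG] at h4

lemma aux_full (n : ℕ) (y : Fin n → ℝ) (r : ℝ) (hr : 0 < r) :
    ∏ i, (1 + r ^ 2 * (y i) ^ 2) ≤
      (∑ m ∈ Finset.range (n + 1), |esymmS n m y| * r ^ m) ^ 2 := by
  have h1 : ∏ i, (1 + Complex.I * (r * y i)) =
      ∑ m ∈ Finset.range (n + 1), Complex.I ^ m * (r ^ m * (esymmS n m y : ℂ)) := by
    rw [Finset.prod_one_add, Finset.sum_powerset]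
    simp only [Finset.card_univ, Fintype.card_fin]
    refine Finset.sum_congr rfl fun m _ => ?_
    rw [esymmS]
    push_cast
    rw [Finset.mul_sum, Finset.mul_sum]
    refine Finset.sum_congr rfl fun A hA => ?_
    rw [Finset.prod_mul_distrib, Finset.prod_mul_distrib, Finset.prod_const, Finset.prod_const,
      (Finset.mem_powersetCard.1 hA).2]
  have h2 : ‖∏ i, (1 + Complex.I * (r * y i))‖ ^ 2 = ∏ i, (1 + r ^ 2 * (y i) ^ 2) := by
    rw [norm_prod, ← Finset.prod_pow]
    refine Finset.prod_congr rfl fun i _ => ?_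
    rw [← Complex.normSq_eq_norm_sq, Complex.normSq_apply]
    simp
    ring
  rw [← h2, h1]
  gcongr
  refine (norm_sum_le _ _).trans (Finset.sum_le_sum fun m _ => ?_)
  simp [abs_of_pos hr, mul_comm]

open Polynomial in
lemma aux_step (n : ℕ) (y : Fin (n + 1) → ℝ) :
    ∃ z : Fin n → ℝ, ∀ m ≤ n, smean n m z = smean (n + 1) m y := by
  set P : ℝ[X] := ∏ i, (X + C (y i)) with hP
  have hPd : P.natDegree = n + 1 := by
    rw [hP, natDegree_prod_of_monic _ _ (fun i _ => monic_X_add_C _)]; simp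
  have hPm : P.Monic := monic_prod_of_monic _ _ (fun i _ => monic_X_add_C _)
  have hPs : P.Splits := Splits.prod (fun i _ => Splits.X_add_C _)
  have hcard : P.roots.card = n + 1 := by rw [← hPd]; exact splits_iff_card_roots.1 hPs
  have hd : (derivative P).natDegree = n := by
    rw [natDegree_derivative, hPd]; rfl
  have hds : (derivative P).Splits := by
    rw [splits_iff_card_roots]
    apply le_antisymm (card_roots' _)
    have := card_roots_le_derivative P
    omega
  have hdl : (derivative P).leadingCoeff = n + 1 := by
    rw [leadingCoeff, hd, coeff_derivative, ← hPd, coeff_natDegree, hPm]; simp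
  have hdc : (derivative P).roots.card = n := by rw [← hd]; exact splits_iff_card_roots.1 hds
  have hlen : (derivative P).roots.toList.length = n := by simpa using hdc
  refine ⟨fun i => - (derivative P).roots.toList.get (i.cast hlen.symm), fun m hm => ?_⟩
  set z : Fin n → ℝ := fun i => - (derivative P).roots.toList.get (i.cast hlen.symm) with hz
  have hQ : derivative P = C ((n : ℝ) + 1) * ∏ i, (X + C (z i)) := by
    conv_lhs => rw [hds.eq_prod_roots, hdl]
    congr 1
    conv_lhs => rw [← Multiset.coe_toList (derivative P).roots]
    rw [Multiset.map_coe, Multiset.prod_coe, ← List.prod_ofFn]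
    congr 1
    apply List.ext_get
    · simp [hdc]
    · intro k h1 h2
      simp [hz, sub_eq_add_neg]
  have c1 : ∀ (k : ℕ) (w : Fin k → ℝ) (j : ℕ), j ≤ k →
      (∏ i, (X + C (w i))).coeff (k - j) = esymmS k j w := by
    intro k w j hj
    rw [Finset.prod_X_add_C_coeff _ _ (by simp)]
    simp only [Finset.card_univ, Fintype.card_fin]
    rw [Nat.sub_sub_self hj, esymmS]
  have e1 := congrArg (fun q => q.coeff (n - m)) hQ
  simp only [coeff_C_mul, coeff_derivative] at e1
  rw [c1 n z m hm, hP, show n - m + 1 = n + 1 - m by omega, c1 (n + 1) y m (by omega)] at e1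
  have e2 : ((n.choose m : ℕ) : ℝ) * (n + 1) = ((n + 1).choose m : ℕ) * ((n - m : ℕ) + 1 : ℝ) := by
    have := Nat.choose_mul_succ_eq n m
    rw [show n + 1 - m = n - m + 1 by omega] at this
    exact_mod_cast this
  have p1 : (0 : ℝ) < n.choose m := by exact_mod_cast Nat.choose_pos hm
  have p2 : (0 : ℝ) < (n + 1).choose m := by exact_mod_cast Nat.choose_pos (by omega)
  have p3 : (0 : ℝ) < (n : ℝ) + 1 := by positivity
  rw [smean, smean, div_eq_div_iff p1.ne' p2.ne']
  apply mul_left_cancel₀ p3.ne'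
  linear_combination (-((n + 1).choose m : ℝ)) * e1 - (esymmS (n + 1) m y) * e2

lemma aux_reduce (l k : ℕ) : ∀ (y : Fin (l + k) → ℝ),
    ∃ z : Fin l → ℝ, ∀ m ≤ l, smean l m z = smean (l + k) m y := by
  induction k with
  | zero => exact fun y => ⟨y, fun _ _ => rfl⟩
  | succ k ih =>
    intro y
    obtain ⟨w, hw⟩ := aux_step (l + k) y
    obtain ⟨z, hz⟩ := ih w
    exact ⟨z, fun m hm => (hz m hm).trans (hw m (by omega))⟩

theorem new_inequality_r1 :
    ∀ (n : ℕ), 1 ≤ n → ∀ (y : Fin n → ℝ) (r : ℝ), 0 < r → ∀ (ℓ : ℕ), 1 ≤ ℓ → ℓ ≤ n →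
      ∑ m ∈ Finset.range (ℓ + 1), (ℓ.choose m : ℝ) * |smean n m y| * r ^ m ≥
        (1 + |smean n ℓ y| ^ ((2 : ℝ) / ℓ) * r ^ 2) ^ ((ℓ : ℝ) / 2) := by
  intro n hn y r hr l hl hln
  obtain ⟨k, rfl⟩ := Nat.exists_eq_add_of_le hln
  obtain ⟨z, hz⟩ := aux_reduce l k y
  have hl0 : (l : ℝ) ≠ 0 := by positivity
  have hS : ∑ m ∈ Finset.range (l + 1), (l.choose m : ℝ) * |smean (l + k) m y| * r ^ m =
      ∑ m ∈ Finset.range (l + 1), |esymmS l m z| * r ^ m := by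
    refine Finset.sum_congr rfl fun m hm => ?_
    have hm' : m ≤ l := by simpa [Nat.lt_succ_iff] using hm
    have p1 : (0 : ℝ) < l.choose m := by exact_mod_cast Nat.choose_pos hm'
    rw [← hz m hm', smean, abs_div, abs_of_pos p1]
    field_simp
  have hT : smean l l z = ∏ i, z i := by
    have : powersetCard l (univ : Finset (Fin l)) = {univ} := by
      have h := Finset.powersetCard_self (univ : Finset (Fin l))
      rwa [Finset.card_univ, Fintype.card_fin] at h
    simp [smean, esymmS, this]
  rw [hS, ← hz l le_rfl, hT]
  have hf := aux_full l z r hr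
  have hg := aux_geom l hl (fun i => r ^ 2 * (z i) ^ 2) (fun i => by positivity)
  have hS0 : 0 ≤ ∑ m ∈ Finset.range (l + 1), |esymmS l m z| * r ^ m :=
    Finset.sum_nonneg fun m _ => by positivity
  have e : (∏ i, r ^ 2 * (z i) ^ 2) ^ (1 / (l : ℝ)) = |∏ i, z i| ^ ((2 : ℝ) / l) * r ^ 2 := by
    rw [Finset.prod_mul_distrib, Finset.prod_const, Finset.prod_pow, ← sq_abs (∏ i, z i),
      Real.mul_rpow (by positivity) (by positivity), mul_comm]
    congr 1
    · rw [← Real.rpow_natCast, ← Real.rpow_mul (by positivity)]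
      congr 1
      push_cast; ring
    · simp only [Finset.card_univ, Fintype.card_fin, one_div]
      exact Real.pow_rpow_inv_natCast (by positivity) (by omega)
  rw [e] at hg
  set S := ∑ m ∈ Finset.range (l + 1), |esymmS l m z| * r ^ m
  have hP0 : 0 ≤ ∏ i, (1 + r ^ 2 * (z i) ^ 2) := Finset.prod_nonneg fun i _ => by positivity
  calc (1 + |∏ i, z i| ^ ((2 : ℝ) / l) * r ^ 2) ^ ((l : ℝ) / 2)
      ≤ ((S ^ 2) ^ (1 / (l : ℝ))) ^ ((l : ℝ) / 2) := by
        apply Real.rpow_le_rpow (by positivity) _ (by positivity)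
        exact hg.trans (Real.rpow_le_rpow hP0 hf (by positivity))
    _ = S := by
        rw [← Real.rpow_mul (by positivity), ← Real.rpow_natCast, ← Real.rpow_mul hS0]
        rw [show ((2 : ℕ) : ℝ) * (1 / (l : ℝ) * ((l : ℝ) / 2)) = 1 by field_simp; norm_num]
        exact Real.rpow_one S
end

section
/- For every n ≥ 1, all real numbers y_1, …, y_n, and all integers 1 ≤ k ≤ ℓ ≤ n with k < n, one has |s_ℓ(y)|^(1/ℓ) ≤ C · ℓ^(1/2) · max( |s_k(y)|^(1/k), |s_{k+1}(y)|^(1/(k+1)) ), where C := max( e^(4/e)·√2, 2·√7 ). -/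
open Finset Real

/-- Symmetric mean of a multiset. -/
noncomputable def msm (Y : Multiset ℝ) (j : ℕ) : ℝ :=
  Y.esymm j / ((Multiset.card Y).choose j : ℝ)

lemma msm_zero (Y : Multiset ℝ) : msm Y 0 = 1 := by
  simp [msm, Multiset.esymm]

lemma esymm_cons_succ (a : ℝ) (s : Multiset ℝ) (j : ℕ) :
    (a ::ₘ s).esymm (j + 1) = a * s.esymm j + s.esymm (j + 1) := by
  simp only [Multiset.esymm, Multiset.powersetCard_cons, Multiset.map_add, Multiset.sum_add,
    Multiset.map_map, Function.comp_def, Multiset.prod_cons, Multiset.sum_map_mul_left]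
  ring

lemma esymm_zero' (s : Multiset ℝ) : s.esymm 0 = 1 := by simp [Multiset.esymm]

lemma esymm_card (s : Multiset ℝ) : s.esymm (Multiset.card s) = s.prod := by
  simp [Multiset.esymm, Multiset.powersetCard_self]

lemma esymm_gt (s : Multiset ℝ) (j : ℕ) (h : Multiset.card s < j) : s.esymm j = 0 := by
  simp [Multiset.esymm, Multiset.powersetCard_eq_empty _ h]

lemma msm_card (Y : Multiset ℝ) : msm Y (Multiset.card Y) = Y.prod := by
  simp [msm, esymm_card]

lemma esymm_inv (s : Multiset ℝ) (hs : (0:ℝ) ∉ s) : ∀ i j, i + j = Multiset.card s →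
    (s.map (·⁻¹)).esymm j * s.prod = s.esymm i := by
  induction s using Multiset.induction_on with
  | empty =>
    intro i j h
    simp at h
    simp [h.1, h.2, Multiset.esymm]
  | cons a s ih =>
    intro i j h
    have ha : a ≠ 0 := fun h0 => hs (by simp [h0])
    have hs' : (0:ℝ) ∉ s := fun h0 => hs (by simp [h0])
    have ih := ih hs'
    rw [Multiset.card_cons] at h
    rw [Multiset.map_cons, Multiset.prod_cons]
    rcases j with _ | j
    · have : i = Multiset.card (a ::ₘ s) := by simp; omega
      rw [this, esymm_card, esymm_zero']; simp
    · rw [esymm_cons_succ]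
      rcases i with _ | i
      · rw [esymm_gt _ (j+1) (by simp; omega)]
        have := ih 0 j (by omega)
        rw [esymm_zero'] at this ⊢
        have h3 : a * a⁻¹ = 1 := mul_inv_cancel₀ ha
        linear_combination (a * a⁻¹) * this + h3
      · rw [esymm_cons_succ]
        have h1 := ih (i+1) j (by omega)
        have h2 := ih i (j+1) (by omega)
        rw [← h1, ← h2]
        have h3 : a * a⁻¹ = 1 := mul_inv_cancel₀ ha
        linear_combination ((s.map (·⁻¹)).esymm j * s.prod) * h3

lemma msm_inv (s : Multiset ℝ) (hs : s.prod ≠ 0) (i j : ℕ) (h : i + j = Multiset.card s) :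
    msm (s.map (·⁻¹)) j = msm s i / msm s (Multiset.card s) := by
  have h0 : (0:ℝ) ∉ s := fun h0 => hs (Multiset.prod_eq_zero h0)
  rw [msm_card, msm, msm, ← esymm_inv s h0 i j h, Multiset.card_map,
    Nat.choose_symm_of_eq_add h.symm]
  field_simp

open Polynomial in
lemma exists_deriv (n : ℕ) (Y : Multiset ℝ) (hY : Multiset.card Y = n + 1) :
    ∃ Z : Multiset ℝ, Multiset.card Z = n ∧ ∀ j ≤ n, msm Z j = msm Y j := by
  set P : ℝ[X] := (Y.map fun t => X - C t).prod with hP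
  have hmon : P.Monic := by
    rw [hP]; exact monic_multisetProd_X_sub_C Y
  have hdeg : P.natDegree = n + 1 := by
    rw [hP, natDegree_multiset_prod_X_sub_C_eq_card, hY]
  have hroots : P.roots = Y := by rw [hP, roots_multiset_prod_X_sub_C]
  have hd : P.derivative.natDegree = n := by
    rw [natDegree_derivative, hdeg]; rfl
  have hcard : Multiset.card P.derivative.roots = P.derivative.natDegree := by
    have h1 := card_roots_le_derivative P
    have h2 := card_roots' P.derivative
    rw [hroots, hY] at h1
    omega
  refine ⟨P.derivative.roots, by rw [hcard, hd], fun j hj => ?_⟩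
  have hlc : P.derivative.leadingCoeff = n + 1 := by
    rw [leadingCoeff, hd, coeff_derivative]
    have : P.coeff (n+1) = 1 := by rw [← hdeg]; exact hmon
    rw [this]; ring
  have h1 := coeff_eq_esymm_roots_of_card hcard (k := n - j) (by omega)
  rw [hd, hlc, coeff_derivative, hP, Multiset.prod_X_sub_C_coeff Y (by omega), ← hP, hY] at h1
  have e1 : n + 1 - (n - j + 1) = j := by omega
  have e2 : n - (n - j) = j := by omega
  rw [e1, e2, Nat.cast_sub hj] at h1
  have hc : ((n+1).choose j : ℝ) * (n + 1 - j) = (n + 1) * (n.choose j) := by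
    have h3 := Nat.choose_mul_succ_eq n j
    have h4 : ((n.choose j * (n+1) : ℕ) : ℝ) = (((n+1).choose j * (n + 1 - j) : ℕ) : ℝ) := by
      rw [h3]
    rw [Nat.cast_mul, Nat.cast_mul, Nat.cast_sub (by omega)] at h4
    push_cast at h4
    linarith
  have hpos1 : (0:ℝ) < (n+1).choose j := by exact_mod_cast Nat.choose_pos (by omega)
  have hpos2 : (0:ℝ) < n.choose j := by exact_mod_cast Nat.choose_pos (by omega)
  rw [msm, msm, hcard, hd, hY, div_eq_div_iff hpos2.ne' hpos1.ne']
  have hs : ((-1:ℝ)^j) ≠ 0 := by positivity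
  have hn : ((n:ℝ)+1) ≠ 0 := by positivity
  apply mul_left_cancel₀ hs
  apply mul_left_cancel₀ hn
  linear_combination (-((n+1).choose j : ℝ)) * h1 + ((-1)^j * Y.esymm j) * hc

lemma exists_trunc (m : ℕ) : ∀ (n : ℕ) (Y : Multiset ℝ), Multiset.card Y = n → m ≤ n →
    ∃ Z : Multiset ℝ, Multiset.card Z = m ∧ ∀ j ≤ m, msm Z j = msm Y j := by
  intro n
  induction n with
  | zero => intro Y hY hm; exact ⟨Y, by omega, fun _ _ => rfl⟩
  | succ n ih =>
    intro Y hY hm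
    rcases hm.eq_or_lt with h | h
    · exact ⟨Y, by omega, fun _ _ => rfl⟩
    · obtain ⟨Z, hZ, hZ'⟩ := exists_deriv n Y hY
      obtain ⟨W, hW, hW'⟩ := ih Z hZ (by omega)
      exact ⟨W, hW, fun j hj => by rw [hW' j hj, hZ' j (by omega)]⟩

/-- the window of symmetric means from `a` to `a + m`. -/
lemma exists_window (Y : Multiset ℝ) (a m : ℕ) (h : a + m ≤ Multiset.card Y)
    (h1 : msm Y (a + m) ≠ 0) (h2 : msm Y a ≠ 0) :
    ∃ Z : Multiset ℝ, Multiset.card Z = m ∧ ∀ j ≤ m, msm Z j = msm Y (a + j) / msm Y a := by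
  obtain ⟨Y1, c1, e1⟩ := exists_trunc (a + m) _ Y rfl h
  have p1 : Y1.prod ≠ 0 := by
    rw [← msm_card, c1, e1 _ le_rfl]; exact h1
  obtain ⟨Y2, c2, e2⟩ := exists_trunc m (a + m) (Y1.map (·⁻¹)) (by simp [c1]) (by omega)
  have e3 : ∀ j ≤ m, msm Y2 j = msm Y (a + m - j) / msm Y (a + m) := by
    intro j hj
    rw [e2 j hj, msm_inv Y1 p1 (a + m - j) j (by omega), c1, e1 _ le_rfl, e1 _ (by omega)]
  have p2 : Y2.prod ≠ 0 := by
    rw [← msm_card, c2, e3 _ le_rfl, Nat.add_sub_cancel]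
    exact div_ne_zero h2 h1
  refine ⟨Y2.map (·⁻¹), by simp [c2], fun j hj => ?_⟩
  rw [msm_inv Y2 p2 (m - j) j (by omega), c2, e3 _ le_rfl, e3 _ (by omega), Nat.add_sub_cancel]
  have : a + m - (m - j) = a + j := by omega
  rw [this]
  field_simp

lemma esymm_one' (s : Multiset ℝ) : s.esymm 1 = s.sum := by
  simp [Multiset.esymm, Multiset.powersetCard_one]

lemma sum_sq_eq (s : Multiset ℝ) : (s.map (·^2)).sum = s.esymm 1 ^ 2 - 2 * s.esymm 2 := by
  induction s using Multiset.induction_on with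
  | empty => simp [Multiset.esymm, Multiset.powersetCard_zero_right]
  | cons a s ih =>
    rw [Multiset.map_cons, Multiset.sum_cons, ih, esymm_cons_succ a s 1, esymm_cons_succ a s 0,
      esymm_zero']
    ring

lemma amgm (s : Multiset ℝ) (hs : 0 < Multiset.card s) :
    s.prod ^ 2 ≤ ((s.map (·^2)).sum / Multiset.card s) ^ (Multiset.card s) := by
  have key : ∀ (n : ℕ) (f : Fin n → ℝ), 0 < n → (∏ i, f i)^2 ≤ ((∑ i, f i ^ 2) / n) ^ n := by
    intro n f hn
    have hn' : (n:ℝ) ≠ 0 := by positivity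
    have := Real.geom_mean_le_arith_mean_weighted (univ : Finset (Fin n)) (fun _ => (1:ℝ)/n)
      (fun i => f i ^ 2) (fun _ _ => by positivity) (by simp [hn']) (fun _ _ => by positivity)
    have h2 := pow_le_pow_left₀ (by positivity) this n
    rw [← Finset.prod_pow] at h2
    have h3 : ∀ i, ((f i ^ 2) ^ ((1:ℝ)/n)) ^ n = f i ^ 2 := by
      intro i
      rw [one_div]
      exact Real.rpow_inv_natCast_pow (by positivity) (by omega)
    simp only [h3] at h2
    rw [Finset.prod_pow, ← Finset.mul_sum] at h2
    have h4 : (∑ i, f i ^ 2) / (n:ℝ) = 1 / n * ∑ i, f i ^ 2 := by ring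
    rw [h4]
    exact h2
  obtain ⟨l, rfl⟩ := Quot.exists_rep s
  have := key l.length l.get (by simpa using hs)
  have e1 : ∏ i, l.get i = l.prod := by
    rw [← List.prod_ofFn, List.ofFn_get]
  have e2 : ∑ i, l.get i ^ 2 = (l.map (·^2)).sum := by
    rw [← List.sum_ofFn]
    congr 1
    conv_rhs => rw [← List.ofFn_get l, List.map_ofFn]
    rfl
  rw [e1, e2] at this
  simpa using this

lemma key_ineq (Y : Multiset ℝ) (a m : ℕ) (hm : 2 ≤ m) (h : a + m ≤ Multiset.card Y) :
    msm Y (a + m) ^ 2 * |msm Y a| ^ (2 * m - 2) ≤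
      (m * msm Y (a + 1) ^ 2 + (m - 1) * (|msm Y a| * |msm Y (a + 2)|)) ^ m := by
  have hm1 : (2:ℝ) ≤ m := by exact_mod_cast hm
  have hR : 0 ≤ (m * msm Y (a + 1) ^ 2 + (m - 1) * (|msm Y a| * |msm Y (a + 2)|)) := by
    have : (0:ℝ) ≤ m - 1 := by linarith
    positivity
  by_cases h2 : msm Y a = 0
  · rw [h2, abs_zero, zero_pow (by omega), mul_zero]
    rw [h2, abs_zero] at hR
    exact pow_nonneg hR m
  by_cases h1 : msm Y (a + m) = 0
  · rw [h1]; simp only [ne_eq, OfNat.ofNat_ne_zero, not_false_eq_true, zero_pow, zero_mul]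
    exact pow_nonneg hR m
  obtain ⟨Z, cZ, eZ⟩ := exists_window Y a m h h1 h2
  have hag := amgm Z (by omega)
  rw [← msm_card, sum_sq_eq, cZ, eZ m le_rfl] at hag
  have f1 : Z.esymm 1 = m * msm Z 1 := by
    rw [msm, cZ, Nat.choose_one_right]; field_simp
  have f2 : Z.esymm 2 = m * (m - 1) / 2 * msm Z 2 := by
    have : (m:ℝ) - 1 ≠ 0 := by linarith
    rw [msm, cZ, Nat.cast_choose_two]; field_simp
  have f3 : (Z.esymm 1 ^ 2 - 2 * Z.esymm 2) / m =
      (m * msm Y (a+1) ^ 2 - (m - 1) * (msm Y a * msm Y (a+2))) / msm Y a ^ 2 := by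
    rw [f1, f2, eZ 1 (by omega), eZ 2 hm]; field_simp
  rw [f3, div_pow, div_pow, ← pow_mul] at hag
  have h4 : |msm Y a| ^ (2 * m) = |msm Y a| ^ (2*m - 2) * msm Y a ^ 2 := by
    rw [← sq_abs (msm Y a), ← pow_add]; congr 1; omega
  have h5 : msm Y a ^ (2 * m) = |msm Y a| ^ (2 * m) := by
    rw [pow_mul, pow_mul, sq_abs]
  have hp : 0 < |msm Y a| := abs_pos.mpr h2
  have hp2 : 0 < msm Y a ^ 2 := by positivity
  rw [h5, div_le_div_iff₀ hp2 (by positivity), h4] at hag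
  have h6 : msm Y (a + m) ^ 2 * |msm Y a| ^ (2 * m - 2) ≤
      (m * msm Y (a+1) ^ 2 - (m - 1) * (msm Y a * msm Y (a+2))) ^ m := by
    apply le_of_mul_le_mul_right _ hp2
    linarith
  refine h6.trans ?_
  have h7 : -((m:ℝ) - 1) * (msm Y a * msm Y (a+2)) ≤ (m - 1) * (|msm Y a| * |msm Y (a + 2)|) := by
    rw [← abs_mul]
    have := neg_abs_le (msm Y a * msm Y (a+2))
    nlinarith
  apply (le_abs_self _).trans
  rw [abs_pow]
  apply pow_le_pow_left₀ (abs_nonneg _)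
  rw [abs_le]
  have h8 : ((m:ℝ) - 1) * (msm Y a * msm Y (a+2)) ≤ (m - 1) * (|msm Y a| * |msm Y (a + 2)|) := by
    rw [← abs_mul]
    have := le_abs_self (msm Y a * msm Y (a+2))
    nlinarith
  have : 0 ≤ (m:ℝ) * msm Y (a + 1) ^ 2 := by positivity
  constructor <;> linarith

lemma descend (Y : Multiset ℝ) (l : ℕ) (hl : l ≤ Multiset.card Y) (μ : ℝ) (hμ : 0 < μ)
    (hs : msm Y l ^ 2 = (2 * l) ^ l * μ ^ (2 * l)) (a : ℕ) (ha : a + 2 ≤ l)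
    (h1 : |msm Y (a + 1)| ≤ μ ^ (a + 1)) (h2 : |msm Y (a + 2)| ≤ μ ^ (a + 2)) :
    |msm Y a| < μ ^ a := by
  by_contra! hx
  obtain ⟨m, rfl⟩ : ∃ m, l = a + m := ⟨l - a, by omega⟩
  obtain ⟨p, rfl⟩ : ∃ p, m = p + 2 := ⟨m - 2, by omega⟩
  have key := key_ineq Y a (p + 2) (by omega) hl
  rw [hs] at key
  set x := |msm Y a| with hxd
  have hx0 : 0 < x := lt_of_lt_of_le (by positivity) hx
  have hb : ((p + 2 : ℕ) : ℝ) * msm Y (a + 1) ^ 2 + (((p + 2 : ℕ) : ℝ) - 1) * (x * |msm Y (a + 2)|)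
      ≤ (2 * p + 3) * (x * μ ^ (a + 2)) := by
    push_cast
    have e1 : msm Y (a+1) ^ 2 ≤ x * μ ^ (a + 2) := by
      rw [← sq_abs]
      calc |msm Y (a+1)| ^ 2 ≤ (μ ^ (a+1)) ^ 2 := by gcongr
        _ = μ ^ a * μ ^ (a + 2) := by ring
        _ ≤ _ := by gcongr
    have e2 : x * |msm Y (a + 2)| ≤ x * μ ^ (a + 2) := by gcongr
    have hp : (0:ℝ) ≤ p := by positivity
    nlinarith
  have hpos : 0 ≤ ((p + 2 : ℕ) : ℝ) * msm Y (a + 1) ^ 2 +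
      (((p + 2 : ℕ) : ℝ) - 1) * (x * |msm Y (a + 2)|) := by
    have : (0:ℝ) ≤ ((p + 2 : ℕ) : ℝ) - 1 := by push_cast; linarith [(Nat.cast_nonneg p : (0:ℝ) ≤ p)]
    positivity
  have k2 := key.trans (pow_le_pow_left₀ hpos hb (p + 2))
  have e3 : 2 * (p + 2) - 2 = p + (p + 2) := by omega
  rw [e3, pow_add x, mul_pow _ (x * _), mul_pow x] at k2
  have k3 : (2 * ((a + (p + 2) : ℕ) : ℝ)) ^ (a + (p + 2)) * μ ^ (2 * (a + (p + 2))) * x ^ p ≤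
      (2 * p + 3) ^ (p + 2) * (μ ^ (a + 2)) ^ (p + 2) := by
    apply le_of_mul_le_mul_right _ (pow_pos hx0 (p + 2))
    linarith
  have k4 : (2 * ((a + (p + 2) : ℕ) : ℝ)) ^ (a + (p + 2)) * μ ^ (2 * (a + (p + 2))) * (μ ^ a) ^ p ≤
      (2 * p + 3) ^ (p + 2) * (μ ^ (a + 2)) ^ (p + 2) := by
    refine le_trans ?_ k3
    gcongr
  have e4 : (μ ^ (a + 2)) ^ (p + 2) = μ ^ (2 * (a + (p + 2))) * (μ ^ a) ^ p := by
    rw [← pow_mul, ← pow_mul, ← pow_add]; congr 1; ring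
  rw [e4, mul_assoc] at k4
  have k5 := le_of_mul_le_mul_right k4 (by positivity)
  have k6 : ((2:ℝ) * p + 3) ^ (p + 2) < (2 * ((a + (p + 2) : ℕ) : ℝ)) ^ (a + (p + 2)) := by
    calc ((2:ℝ) * p + 3) ^ (p + 2) < (2 * ((a + (p + 2) : ℕ) : ℝ)) ^ (p + 2) := by
          apply pow_lt_pow_left₀ _ (by positivity) (by omega)
          push_cast
          linarith [(Nat.cast_nonneg a : (0:ℝ) ≤ a)]
      _ ≤ _ := by
          apply pow_le_pow_right₀ _ (by omega)
          push_cast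
          linarith [(Nat.cast_nonneg a : (0:ℝ) ≤ a), (Nat.cast_nonneg p : (0:ℝ) ≤ p)]
  linarith

lemma contra (Y : Multiset ℝ) (l : ℕ) (hl : l ≤ Multiset.card Y) (μ : ℝ) (hμ : 0 < μ)
    (hs : msm Y l ^ 2 = (2 * l) ^ l * μ ^ (2 * l)) (k : ℕ) (hk : 1 ≤ k) (hkl : k + 1 ≤ l)
    (h1 : |msm Y k| ≤ μ ^ k) (h2 : |msm Y (k + 1)| ≤ μ ^ (k + 1)) : False := by
  induction k, hk using Nat.le_induction with
  | base =>
    have := descend Y l hl μ hμ hs 0 (by omega) h1 h2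
    rw [msm_zero] at this
    simp at this
  | succ k hk ih =>
    exact ih (by omega) (descend Y l hl μ hμ hs k (by omega) h1 h2).le h1

lemma smean_eq (n m : ℕ) (y : Fin n → ℝ) : smean n m y = msm (univ.val.map y) m := by
  rw [smean, msm, Finset.esymm_map_val, esymmS]
  simp

theorem prev_bound_explicit :
    ∀ (n : ℕ), 1 ≤ n → ∀ (y : Fin n → ℝ) (k ℓ : ℕ),
      1 ≤ k → k ≤ ℓ → ℓ ≤ n → k < n →
      |smean n ℓ y| ^ ((1 : ℝ) / ℓ) ≤
        max (Real.exp (4 / Real.exp 1) * Real.sqrt 2) (2 * Real.sqrt 7) *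
          (ℓ : ℝ) ^ ((1 : ℝ) / 2) *
          max (|smean n k y| ^ ((1 : ℝ) / k)) (|smean n (k + 1) y| ^ ((1 : ℝ) / (k + 1))) := by
  intro n hn y k l hk hkl hln hkn
  set M := max (|smean n k y| ^ ((1 : ℝ) / k)) (|smean n (k + 1) y| ^ ((1 : ℝ) / (k + 1))) with hM
  have hM0 : 0 ≤ M := le_trans (by positivity) (le_max_left _ _)
  have hl1 : (1:ℝ) ≤ l := by exact_mod_cast hk.trans hkl
  have hC : Real.sqrt 2 ≤ max (Real.exp (4 / Real.exp 1) * Real.sqrt 2) (2 * Real.sqrt 7) := by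
    apply le_max_of_le_left
    have : 1 ≤ Real.exp (4 / Real.exp 1) := Real.one_le_exp (by positivity)
    nlinarith [Real.sqrt_nonneg 2]
  suffices hmain : |smean n l y| ^ ((1 : ℝ) / l) ≤ Real.sqrt 2 * (l : ℝ) ^ ((1 : ℝ) / 2) * M by
    refine hmain.trans ?_
    gcongr
  rw [← Real.sqrt_eq_rpow, ← Real.sqrt_mul (by norm_num)]
  have hsq : 1 ≤ Real.sqrt (2 * l) := by
    rw [Real.one_le_sqrt]; linarith
  rcases hkl.eq_or_lt with rfl | hlt
  · have : |smean n k y| ^ ((1 : ℝ) / k) ≤ M := le_max_left _ _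
    nlinarith
  by_contra! hcon
  set D := |smean n l y| ^ ((1 : ℝ) / l) with hD
  have hD0 : 0 < D := lt_of_le_of_lt (by positivity) hcon
  have hDl : D ^ l = |smean n l y| := by
    rw [hD, one_div]; exact Real.rpow_inv_natCast_pow (abs_nonneg _) (by omega)
  have hMμ : M ≤ D / Real.sqrt (2 * l) := by
    rw [le_div_iff₀ (by positivity)]; linarith
  have g : ∀ j : ℕ, j ≠ 0 → |smean n j y| ^ ((1 : ℝ) / j) ≤ M →
      |smean n j y| ≤ (D / Real.sqrt (2 * l)) ^ j := by
    intro j hj h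
    have e : (|smean n j y| ^ ((1 : ℝ) / j)) ^ j = |smean n j y| := by
      rw [one_div]; exact Real.rpow_inv_natCast_pow (abs_nonneg _) hj
    rw [← e]
    exact pow_le_pow_left₀ (by positivity) (h.trans hMμ) j
  have g1 := g k (by omega) (le_max_left _ _)
  have g2 := g (k + 1) (by omega) (by push_cast; exact le_max_right _ _)
  simp only [smean_eq] at g1 g2 hDl
  refine contra (univ.val.map y) l (by simpa using hln) (D / Real.sqrt (2 * l)) (by positivity)
    ?_ k hk hlt g1 g2
  rw [← sq_abs, ← hDl, div_pow, pow_mul (Real.sqrt _), Real.sq_sqrt (by positivity)]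
  field_simp
  ring
end

section
/- (Truncation symmetry) For every n ≥ 1, all real numbers y_1, …, y_n, and every integer 1 ≤ ℓ ≤ n, there exist real numbers x_1, …, x_ℓ such that s_k(x_1, …, x_ℓ) = s_k(y_1, …, y_n) for all 0 ≤ k ≤ ℓ, where on the left the elementary symmetric mean is taken in ℓ variables and on the right in n variables. -/
open Finset Real

lemma esymmS_eq (n m : ℕ) (y : Fin n → ℝ) :
    esymmS n m y = ((univ : Finset (Fin n)).val.map y).esymm m := by
  rw [Finset.esymm_map_val]; rfl

open Polynomial in
lemma trunc_step (m : ℕ) (y : Fin (m+1) → ℝ) :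
    ∃ x : Fin m → ℝ, ∀ k : ℕ, k ≤ m → smean m k x = smean (m+1) k y := by
  set s : Multiset ℝ := (univ : Finset (Fin (m+1))).val.map y with hs
  have hcard : Multiset.card s = m + 1 := by simp [hs]
  set p : ℝ[X] := (s.map fun a => X - C a).prod with hp
  have hroots : p.roots = s := roots_multiset_prod_X_sub_C s
  have hdeg : p.natDegree = m + 1 := by
    rw [hp, natDegree_multiset_prod_X_sub_C_eq_card, hcard]
  have hmonic : p.Monic := monic_multiset_prod_of_monic _ _ fun a _ => monic_X_sub_C a
  have hddeg : (derivative p).natDegree = m := by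
    rw [natDegree_derivative, hdeg]; rfl
  have h1 := card_roots_le_derivative p
  rw [hroots, hcard] at h1
  have h2 := card_roots' (derivative p)
  have hr : Multiset.card (derivative p).roots = m := by omega
  obtain ⟨l, hl⟩ := Quot.exists_rep (derivative p).roots
  have hl' : (l : Multiset ℝ) = (derivative p).roots := hl
  have hlen : l.length = m := by rw [← hr, ← hl']; rfl
  subst hlen
  refine ⟨l.get, fun k hk => ?_⟩
  have hx : ((univ : Finset (Fin l.length)).val.map l.get) = (derivative p).roots := by
    rw [← hl']; simp
  have hlc : (derivative p).leadingCoeff = l.length + 1 := by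
    rw [leadingCoeff, hddeg, coeff_derivative, ← hdeg, hmonic.coeff_natDegree, one_mul]
  have e1 := coeff_eq_esymm_roots_of_card (p := derivative p) (k := l.length - k)
    (by rw [hr, hddeg]) (by omega)
  have e2 := Multiset.prod_X_sub_C_coeff s (k := l.length - k + 1) (by omega)
  rw [← hp] at e2
  rw [hlc, hddeg, coeff_derivative, e2, hcard,
    show l.length + 1 - (l.length - k + 1) = k by omega,
    show l.length - (l.length - k) = k by omega] at e1
  unfold smean
  rw [esymmS_eq, esymmS_eq, hx, ← hs]
  have hc := Nat.choose_mul_succ_eq l.length k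
  rw [show l.length + 1 - k = l.length - k + 1 by omega] at hc
  have hc' : ((l.length.choose k : ℕ) : ℝ) * (l.length + 1)
      = ((l.length+1).choose k : ℕ) * (((l.length - k : ℕ) : ℝ) + 1) := by exact_mod_cast hc
  have p1 : (0:ℝ) < (l.length.choose k : ℕ) := by exact_mod_cast Nat.choose_pos hk
  have p2 : (0:ℝ) < ((l.length+1).choose k : ℕ) := by
    exact_mod_cast Nat.choose_pos (by omega)
  have p3 : (0:ℝ) < (l.length : ℝ) + 1 := by positivity
  have hsg : ((-1:ℝ)^k) ≠ 0 := by simp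
  have e3 : s.esymm k * (((l.length - k : ℕ) : ℝ) + 1)
      = (l.length + 1) * (derivative p).roots.esymm k := by
    apply mul_left_cancel₀ hsg
    linarith
  rw [div_eq_div_iff p1.ne' p2.ne']
  apply mul_left_cancel₀ p3.ne'
  linear_combination (-(((l.length+1).choose k : ℕ) : ℝ)) * e3 - s.esymm k * hc'

theorem truncation_symmetry :
    ∀ (n : ℕ), 1 ≤ n → ∀ (y : Fin n → ℝ) (ℓ : ℕ), 1 ≤ ℓ → ℓ ≤ n →
      ∃ x : Fin ℓ → ℝ, ∀ k : ℕ, k ≤ ℓ → smean ℓ k x = smean n k y := by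
  intro n _ y ℓ _ h
  induction n, h using Nat.le_induction with
  | base => exact ⟨y, fun _ _ => rfl⟩
  | succ n hn ih =>
    obtain ⟨z, hz⟩ := trunc_step n y
    obtain ⟨x, hx⟩ := ih (by omega) z
    exact ⟨x, fun k hk => (hx k hk).trans (hz k (hk.trans hn))⟩
end

section
/- Let n be an even positive integer and let y = (y_1, …, y_n) consist of exactly n/2 entries equal to +1 and n/2 entries equal to −1. Then for all 0 ≤ k ≤ n: if k is even then s_k(y) = (−1)^(k/2) · binom(n/2, k/2) / binom(n, k), and if k is odd then s_k(y) = 0. -/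
open Finset Real

open Polynomial in
theorem esymmS_balanced_aux (m : ℕ) (y : Fin (m + m) → ℝ)
    (hy : ∀ i, y i = 1 ∨ y i = -1)
    (hcard : (Finset.univ.filter fun i => y i = 1).card = m) (k : ℕ) (hk : k ≤ m + m) :
    esymmS (m + m) k y = (expand ℝ 2 ((X + C (-1 : ℝ)) ^ m)).coeff (m + m - k) := by
  have h1 := Finset.prod_X_add_C_coeff (univ : Finset (Fin (m + m))) y (k := m + m - k) (by simp)
  have h2 : (∏ i, (X + C (y i)) : ℝ[X]) = expand ℝ 2 ((X + C (-1 : ℝ)) ^ m) := by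
    have hc : (Finset.univ.filter fun i => ¬ y i = 1).card = m := by
      have := Finset.card_filter_add_card_filter_not (s := (univ : Finset (Fin (m + m)))) (fun i => y i = 1)
      simp only [Finset.card_univ, Fintype.card_fin] at this
      omega
    rw [← Finset.prod_filter_mul_prod_filter_not univ (fun i => y i = 1)]
    rw [Finset.prod_congr rfl (g := fun _ => (X + C 1 : ℝ[X])), Finset.prod_const, hcard,
      Finset.prod_congr rfl (g := fun _ => (X + C (-1) : ℝ[X])), Finset.prod_const, hc, ← mul_pow]
    · simp only [map_pow, map_add, expand_X, expand_C]
      congr 1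
      simp only [map_neg, map_one]
      ring
    · intro i hi
      rw [(hy i).resolve_left (Finset.mem_filter.1 hi).2]
    · intro i hi
      rw [(Finset.mem_filter.1 hi).2]
  rw [← h2, h1, esymmS]
  simp only [Finset.card_univ, Fintype.card_fin]
  rw [Nat.sub_sub_self hk]

theorem smean_of_balanced_signs (n : ℕ) (hn : 0 < n) (hev : Even n) (y : Fin n → ℝ)
    (hy : ∀ i, y i = 1 ∨ y i = -1)
    (hcard : (Finset.univ.filter fun i => y i = 1).card = n / 2) :
    ∀ k : ℕ, k ≤ n →
      (Even k → smean n k y = (-1) ^ (k / 2) * (Nat.choose (n / 2) (k / 2) : ℝ) / (Nat.choose n k : ℝ)) ∧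
      (Odd k → smean n k y = 0) := by
  intro k hk
  obtain ⟨m, rfl⟩ := hev
  have hm : (m + m) / 2 = m := by omega
  rw [hm] at hcard ⊢
  have h := esymmS_balanced_aux m y hy hcard k hk
  rw [Polynomial.coeff_expand (by norm_num)] at h
  constructor
  · rintro ⟨j, rfl⟩
    have hj : (j + j) / 2 = j := by omega
    rw [if_pos (by omega), Polynomial.coeff_X_add_C_pow,
      show (m + m - (j + j)) / 2 = m - j by omega, Nat.sub_sub_self (by omega),
      Nat.choose_symm (by omega)] at h
    rw [hj, smean, h]
  · rintro ⟨j, rfl⟩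
    rw [if_neg (by omega)] at h
    rw [smean, h, zero_div]
end

section
/- There exist absolute constants c, C > 0 such that the following holds: for every even positive integer n, if y = (y_1, …, y_n) consists of exactly n/2 entries equal to +1 and n/2 entries equal to −1, then for every even integer k with 2 ≤ k ≤ n one has c · (k/n)^(1/2) ≤ |s_k(y)|^(1/k) ≤ C · (k/n)^(1/2). -/
open Finset Real

open Polynomial in
lemma esymm_bal (N j : ℕ) (hj : j ≤ N) (y : Fin (2 * N) → ℝ)
    (hy : ∀ i, y i = 1 ∨ y i = -1)
    (hc : (Finset.univ.filter fun i => y i = 1).card = N) :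
    |esymmS (2 * N) (2 * j) y| = (N.choose j : ℝ) := by
  have h1 := Finset.prod_X_add_C_coeff (univ : Finset (Fin (2 * N))) y
    (k := 2 * N - 2 * j) (by simp)
  have e : #(univ : Finset (Fin (2 * N))) - (2 * N - 2 * j) = 2 * j := by
    simp; omega
  rw [e] at h1
  have hc' : (Finset.univ.filter fun i => ¬ y i = 1).card = N := by
    have := Finset.card_filter_add_card_filter_not (s := (univ : Finset (Fin (2 * N)))) (fun i => y i = 1)
    rw [hc] at this
    simp at this
    omega
  have h2 : (∏ i : Fin (2 * N), (X + C (y i))) = expand ℝ 2 ((X + C (-1)) ^ N) := by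
    rw [← Finset.prod_filter_mul_prod_filter_not univ (fun i => y i = 1)]
    rw [Finset.prod_congr rfl (g := fun _ => (X + C (1 : ℝ))) (by
      intro i hi; rw [(Finset.mem_filter.mp hi).2])]
    rw [Finset.prod_congr (s₁ := Finset.univ.filter fun i => ¬ y i = 1) rfl (g := fun _ => (X + C (-1 : ℝ))) (by
      intro i hi; rw [(hy i).resolve_left (Finset.mem_filter.mp hi).2])]
    rw [Finset.prod_const, Finset.prod_const, hc, hc', ← mul_pow, map_pow]
    congr 1
    simp
    ring
  unfold esymmS
  rw [← h1, h2, show 2 * N - 2 * j = (N - j) * 2 by omega, coeff_expand_mul (by norm_num),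
    coeff_X_add_C_pow, abs_mul, abs_pow, Nat.choose_symm hj]
  simp

lemma choose_lower (n k : ℕ) (h : k ≤ n) : ((n : ℝ) / k) ^ k ≤ n.choose k := by
  induction k generalizing n with
  | zero => simp
  | succ k ih =>
    obtain ⟨m, rfl⟩ : ∃ m, n = m + 1 := ⟨n - 1, by omega⟩
    have hm : k ≤ m := by omega
    have h1 : ((m + 1).choose (k + 1) : ℝ) = ((m + 1 : ℕ) : ℝ) / (k + 1 : ℕ) * m.choose k := by
      have := Nat.add_one_mul_choose_eq m k
      have h2 : ((m + 1 : ℕ) : ℝ) * m.choose k = (m + 1).choose (k + 1) * ((k + 1 : ℕ) : ℝ) := by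
        exact_mod_cast this
      field_simp
      linarith
    rw [h1, pow_succ']
    refine mul_le_mul_of_nonneg_left ?_ (by positivity)
    refine le_trans ?_ (ih m hm)
    rcases Nat.eq_zero_or_pos k with rfl | hk
    · simp
    · have hk' : (0 : ℝ) < k := by exact_mod_cast hk
      have hm' : (k : ℝ) ≤ m := by exact_mod_cast hm
      refine pow_le_pow_left₀ (by positivity) ?_ k
      rw [div_le_div_iff₀ (by positivity) hk']
      push_cast
      nlinarith

lemma choose_upper (n k : ℕ) (hk : 0 < k) :
    (n.choose k : ℝ) ≤ (Real.exp 1 * ((n : ℝ) / k)) ^ k := by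
  have h1 : (n.choose k : ℝ) ≤ (n : ℝ) ^ k / (k.factorial : ℝ) := Nat.choose_le_pow_div k n
  have h2 := Real.pow_div_factorial_le_exp (k : ℝ) (by positivity) k
  have hk' : (0 : ℝ) < k := by exact_mod_cast hk
  refine h1.trans ?_
  rw [mul_pow, ← Real.exp_nat_mul, mul_one, div_pow]
  have : (n : ℝ) ^ k / (k.factorial : ℝ) = (k : ℝ) ^ k / k.factorial * ((n : ℝ) ^ k / (k : ℝ) ^ k) := by
    field_simp
  rw [this]
  exact mul_le_mul_of_nonneg_right h2 (by positivity)

theorem smean_of_balanced_signs_asymp :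
    ∃ c C : ℝ, 0 < c ∧ 0 < C ∧
      ∀ (n : ℕ), 0 < n → Even n → ∀ (y : Fin n → ℝ),
        (∀ i, y i = 1 ∨ y i = -1) →
        (Finset.univ.filter fun i => y i = 1).card = n / 2 →
        ∀ k : ℕ, Even k → 2 ≤ k → k ≤ n →
          c * ((k : ℝ) / n) ^ ((1 : ℝ) / 2) ≤ |smean n k y| ^ ((1 : ℝ) / k) ∧
          |smean n k y| ^ ((1 : ℝ) / k) ≤ C * ((k : ℝ) / n) ^ ((1 : ℝ) / 2) := by
  refine ⟨(Real.exp 1)⁻¹, Real.exp 1, by positivity, by positivity, ?_⟩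
  intro n hn hne y hy hc k hke hk2 hkn
  obtain ⟨N, rfl⟩ := hne.two_dvd
  obtain ⟨j, rfl⟩ := hke.two_dvd
  have hj : 0 < j := by omega
  have hjN : j ≤ N := by omega
  have hN : 0 < N := by omega
  have hj' : (0 : ℝ) < j := by exact_mod_cast hj
  have hN' : (0 : ℝ) < N := by exact_mod_cast hN
  rw [Nat.mul_div_cancel_left _ (by norm_num)] at hc
  have hs : |smean (2 * N) (2 * j) y| = (N.choose j : ℝ) / ((2 * N).choose (2 * j) : ℝ) := by
    unfold smean
    rw [abs_div, esymm_bal N j hjN y hy hc, Nat.abs_cast]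
  have hq : (((2 * j : ℕ) : ℝ) / ((2 * N : ℕ) : ℝ)) = (j : ℝ) / N := by
    push_cast
    field_simp
  have hq2 : (((2 * N : ℕ) : ℝ) / ((2 * j : ℕ) : ℝ)) = (N : ℝ) / j := by
    push_cast
    field_simp
  rw [hs, hq]
  have a1 := choose_lower N j hjN
  have a2 := choose_upper N j hj
  have b1 := choose_lower (2 * N) (2 * j) hkn
  have b2 := choose_upper (2 * N) (2 * j) (by omega)
  rw [hq2] at b1 b2
  have hpos : (0 : ℝ) < (2 * N).choose (2 * j) := by exact_mod_cast Nat.choose_pos hkn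
  have he : (1 : ℝ) ≤ Real.exp 1 := Real.one_le_exp (by norm_num)
  have he0 : (0 : ℝ) < Real.exp 1 := Real.exp_pos 1
  set E := Real.exp 1
  have hpow : ∀ a : ℝ, 0 < a →
      (a * ((j : ℝ) / N) ^ ((1 : ℝ) / 2)) ^ (2 * j) = a ^ (2 * j) * ((j : ℝ) / N) ^ j := by
    intro a ha
    rw [mul_pow, ← Real.sqrt_eq_rpow, pow_mul (√_), Real.sq_sqrt (by positivity)]
  have hx : ((j : ℝ) / N) ^ j = (((N : ℝ) / j) ^ j)⁻¹ := by
    rw [← inv_pow, inv_div]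
  have hP : (0 : ℝ) < ((N : ℝ) / j) ^ j := by positivity
  have hPP : ((N : ℝ) / j) ^ (2 * j) = ((N : ℝ) / j) ^ j * ((N : ℝ) / j) ^ j := by
    rw [two_mul, pow_add]
  rw [mul_pow, hPP] at b2
  rw [hPP] at b1
  rw [mul_pow] at a2
  have hEE : E ^ j ≤ E ^ (2 * j) := pow_le_pow_right₀ he (by omega)
  set P := ((N : ℝ) / j) ^ j
  have hk0 : (2 * j) ≠ 0 := by omega
  rw [one_div ((2 * j : ℕ) : ℝ)]
  constructor
  · rw [← Real.pow_rpow_inv_natCast (x := E⁻¹ * _) (by positivity) hk0, hpow _ (by positivity)]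
    refine Real.rpow_le_rpow (by positivity) ?_ (by positivity)
    rw [hx, le_div_iff₀ hpos]
    calc E⁻¹ ^ (2 * j) * P⁻¹ * ((2 * N).choose (2 * j) : ℝ)
        ≤ E⁻¹ ^ (2 * j) * P⁻¹ * (E ^ (2 * j) * (P * P)) :=
          mul_le_mul_of_nonneg_left b2 (by positivity)
      _ = P := by rw [inv_pow]; field_simp
      _ ≤ _ := a1
  · rw [← Real.pow_rpow_inv_natCast (x := E * _) (by positivity) hk0, hpow _ (by positivity)]
    refine Real.rpow_le_rpow (by positivity) ?_ (by positivity)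
    rw [hx, div_le_iff₀ hpos]
    calc (N.choose j : ℝ) ≤ E ^ j * P := a2
      _ ≤ E ^ (2 * j) * P := mul_le_mul_of_nonneg_right hEE hP.le
      _ = E ^ (2 * j) * P⁻¹ * (P * P) := by field_simp
      _ ≤ _ := mul_le_mul_of_nonneg_left b1 (by positivity)
end

section
/- For every n ≥ 2 and all real numbers y_1, …, y_n, one has |s_n(y)|^(2/n) ≤ n · s_1(y)^2 − (n−1) · s_2(y). -/
open Finset Real

theorem sum_sq_aux {ι : Type*} [DecidableEq ι] (y : ι → ℝ) (s : Finset ι) :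
    (∑ i ∈ s, y i) ^ 2 = ∑ i ∈ s, y i ^ 2 + 2 * ∑ A ∈ powersetCard 2 s, ∏ i ∈ A, y i := by
  induction s using Finset.induction_on with
  | empty => simp [Finset.powersetCard_eq_empty.2 (show (∅ : Finset ι).card < 2 by simp)]
  | insert a s ha ih =>
    have h : ∑ A ∈ powersetCard 2 (insert a s), ∏ i ∈ A, y i
        = ∑ A ∈ powersetCard 2 s, ∏ i ∈ A, y i + y a * ∑ i ∈ s, y i := by
      rw [powersetCard_succ_insert ha, sum_union, sum_image]
      · congr 1
        rw [powersetCard_one, sum_map, mul_sum]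
        refine sum_congr rfl fun i hi => ?_
        have : a ≠ i := fun h => ha (h ▸ hi)
        simp [this]
      · intro A hA B hB hAB
        have hA' : a ∉ A := fun h => ha ((mem_powersetCard.1 hA).1 h)
        have hB' : a ∉ B := fun h => ha ((mem_powersetCard.1 hB).1 h)
        rw [← erase_insert hA', ← erase_insert hB']
        rw [hAB]
      · rw [disjoint_left]
        intro A hA hB
        obtain ⟨B, -, rfl⟩ := mem_image.1 hB
        exact ha ((mem_powersetCard.1 hA).1 (mem_insert_self a B))
    rw [h, sum_insert ha, sum_insert ha]
    linear_combination ih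

theorem sn_bound_s1_s2 (n : ℕ) (hn : 2 ≤ n) (y : Fin n → ℝ) :
    |smean n n y| ^ ((2 : ℝ) / n) ≤ n * smean n 1 y ^ 2 - ((n : ℝ) - 1) * smean n 2 y := by
  have hn2 : (2 : ℝ) ≤ n := by exact_mod_cast hn
  have hn0 : (n : ℝ) ≠ 0 := by linarith
  have hn1 : (n : ℝ) - 1 ≠ 0 := by linarith
  have h1 : smean n 1 y = (∑ i, y i) / n := by
    simp [smean, esymmS, powersetCard_one]
  have hnn : smean n n y = ∏ i, y i := by
    have : powersetCard n (univ : Finset (Fin n)) = {univ} := by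
      have h := Finset.powersetCard_self (univ : Finset (Fin n))
      rwa [Finset.card_univ, Fintype.card_fin] at h
    simp [smean, esymmS, this]
  have hR : n * smean n 1 y ^ 2 - ((n : ℝ) - 1) * smean n 2 y = (∑ i, y i ^ 2) / n := by
    rw [h1, smean, esymmS, Nat.cast_choose_two]
    have := sum_sq_aux y univ
    field_simp
    linear_combination this
  rw [hR, hnn]
  have h := Real.geom_mean_le_arith_mean (univ : Finset (Fin n)) (fun _ => 1) (fun i => y i ^ 2)
    (fun _ _ => zero_le_one) (by simp; omega) (fun i _ => sq_nonneg _)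
  simp only [rpow_one, one_mul, sum_const, card_univ, Fintype.card_fin, nsmul_eq_mul, mul_one] at h
  refine le_trans (le_of_eq ?_) h
  rw [prod_pow, ← sq_abs, ← rpow_natCast, ← rpow_mul (abs_nonneg _)]
  congr 1
end

section
/- For every n ≥ 2 and all real numbers y_1, …, y_n, one has |s_n(y)|^(2/n) ≤ max( 2n · |s_1(y)|^2, 2n · |s_2(y)| ). -/
open Finset Real

theorem sq_sum_aux {n : ℕ} (y : Fin n → ℝ) (s : Finset (Fin n)) :
    (∑ i ∈ s, y i) ^ 2 = ∑ i ∈ s, y i ^ 2 + 2 * ∑ A ∈ powersetCard 2 s, ∏ i ∈ A, y i := by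
  induction s using Finset.induction_on with
  | empty =>
    rw [Finset.powersetCard_eq_empty.2 (by simp)]
    simp
  | insert a s ha ih =>
    have h2 : ∑ A ∈ powersetCard 2 (insert a s), ∏ i ∈ A, y i
        = ∑ A ∈ powersetCard 2 s, ∏ i ∈ A, y i + y a * ∑ i ∈ s, y i := by
      rw [Finset.powersetCard_succ_insert ha, Finset.sum_union, Finset.sum_image]
      · congr 1
        rw [Finset.powersetCard_one, Finset.sum_map, Finset.mul_sum]
        refine Finset.sum_congr rfl fun i hi => ?_
        have : a ≠ i := fun h => ha (h ▸ hi)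
        simp [Finset.prod_pair this]
      · intro A hA B hB hAB
        have hA' : a ∉ A := fun h => ha ((Finset.mem_powersetCard.1 hA).1 h)
        have hB' : a ∉ B := fun h => ha ((Finset.mem_powersetCard.1 hB).1 h)
        rw [← Finset.erase_insert hA', ← Finset.erase_insert hB']
        exact congrArg (fun t => Finset.erase t a) hAB
      · rw [Finset.disjoint_left]
        intro A hA hA2
        obtain ⟨B, _, rfl⟩ := Finset.mem_image.1 hA2
        exact ha ((Finset.mem_powersetCard.1 hA).1 (Finset.mem_insert_self a B))
    rw [Finset.sum_insert ha, Finset.sum_insert ha, h2]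
    linear_combination ih

theorem sn_bound_max (n : ℕ) (hn : 2 ≤ n) (y : Fin n → ℝ) :
    |smean n n y| ^ ((2 : ℝ) / n) ≤
      max (2 * n * |smean n 1 y| ^ 2) (2 * n * |smean n 2 y|) := by
  have hn0 : (2 : ℝ) ≤ n := by exact_mod_cast hn
  have hnp : (0 : ℝ) < n := by linarith
  have hs : smean n n y = ∏ i, y i := by
    have h : powersetCard n (univ : Finset (Fin n)) = {univ} := by
      simpa using Finset.powersetCard_self (univ : Finset (Fin n))
    simp [smean, esymmS, h]
  have h1 : ∑ i, y i = n * smean n 1 y := by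
    simp only [smean, esymmS, Finset.powersetCard_one, Finset.sum_map, Nat.choose_one_right]
    simp
    field_simp
  have h2 : 2 * ∑ A ∈ powersetCard 2 (univ : Finset (Fin n)), ∏ i ∈ A, y i
      = n * (n - 1) * smean n 2 y := by
    have : (n : ℝ) - 1 ≠ 0 := by linarith
    rw [smean, esymmS, Nat.cast_choose_two]
    field_simp
  have key := sq_sum_aux y univ
  rw [h1, h2] at key
  rw [hs]
  have e : |∏ i, y i| ^ ((2 : ℝ) / n) = ∏ i, (y i ^ 2) ^ ((1 : ℝ) / n) := by
    rw [Real.finsetProd_rpow _ _ (fun i _ => sq_nonneg _), Finset.prod_pow, ← sq_abs,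
      ← Real.rpow_natCast, ← Real.rpow_mul (abs_nonneg _)]
    congr 1
    push_cast
    ring
  rw [e]
  have amgm : ∏ i, (y i ^ 2) ^ ((1 : ℝ) / n) ≤ ∑ i, (1 : ℝ) / n * y i ^ 2 :=
    Real.geom_mean_le_arith_mean_weighted univ (fun _ => (1 : ℝ) / n) (fun i => y i ^ 2)
      (fun _ _ => by positivity) (by simp; field_simp) (fun i _ => sq_nonneg _)
  rw [← Finset.mul_sum] at amgm
  have e2 : (1 : ℝ) / n * ∑ i, y i ^ 2 = n * smean n 1 y ^ 2 - (n - 1) * smean n 2 y := by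
    have : ∑ i, y i ^ 2 = n * (n * smean n 1 y ^ 2 - (n - 1) * smean n 2 y) := by
      linear_combination -key
    rw [this]
    field_simp
  rw [e2] at amgm
  refine amgm.trans ?_
  rw [sq_abs]
  have a1 := le_max_left (2 * n * smean n 1 y ^ 2) (2 * n * |smean n 2 y|)
  have a2 := le_max_right (2 * n * smean n 1 y ^ 2) (2 * n * |smean n 2 y|)
  have a3 : -((n - 1) * smean n 2 y) ≤ (n - 1) * |smean n 2 y| := by
    nlinarith [neg_abs_le (smean n 2 y)]
  nlinarith [abs_nonneg (smean n 2 y)]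
end

section
/- For every n ≥ 3 and all real numbers y_1, …, y_n, one has |s_n(y)|^(1/n) ≤ max_{k ∈ {1,2}} (2n)^(k/(2(n−k))) · |s_{n−k}(y)|^(1/(n−k)). -/
open Finset Real

lemma aux_compl (n k : ℕ) (hk : k ≤ n) (y : Fin n → ℝ) (hy : ∀ i, y i ≠ 0) :
    esymmS n (n - k) y = (∏ i, y i) * esymmS n k (fun i => (y i)⁻¹) := by
  unfold esymmS
  rw [Finset.mul_sum]
  refine Finset.sum_nbij' (fun A => Aᶜ) (fun A => Aᶜ) ?_ ?_ ?_ ?_ ?_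
  · intro A hA
    simp only [mem_powersetCard_univ, card_compl, Fintype.card_fin] at *
    omega
  · intro A hA
    simp only [mem_powersetCard_univ, card_compl, Fintype.card_fin] at *
    omega
  · intro A _; simp
  · intro A _; simp
  · intro A _
    rw [← Finset.prod_mul_prod_compl A y, Finset.prod_inv_distrib, mul_assoc, mul_inv_cancel₀, mul_one]
    exact Finset.prod_ne_zero_iff.2 fun i _ => hy i

lemma aux_sq {ι : Type*} [DecidableEq ι] (x : ι → ℝ) (s : Finset ι) :
    (∑ i ∈ s, x i) ^ 2 = ∑ i ∈ s, x i ^ 2 + 2 * ∑ A ∈ powersetCard 2 s, ∏ i ∈ A, x i := by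
  induction s using Finset.induction_on with
  | empty => rw [Finset.powersetCard_eq_empty.2 (by simp)]; simp
  | insert a s ha ih =>
    rw [Finset.powersetCard_succ_insert ha, Finset.sum_union, Finset.sum_image, Finset.sum_insert ha,
      Finset.sum_insert ha, Finset.powersetCard_one, Finset.sum_map]
    · have : ∀ i ∈ s, ∏ j ∈ insert a ({i} : Finset ι), x j = x a * x i := by
        intro i hi
        rw [Finset.prod_insert (by simp; rintro rfl; exact ha hi), Finset.prod_singleton]
      have h2 := Finset.sum_congr rfl this
      simp only [Function.Embedding.coeFn_mk]
      rw [h2, ← Finset.mul_sum]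
      linarith
    · intro A hA B hB h
      simp only [mem_coe, mem_powersetCard] at hA hB
      have hA' : a ∉ A := fun h => ha (hA.1 h)
      have hB' : a ∉ B := fun h => ha (hB.1 h)
      rw [← Finset.erase_insert hA', ← Finset.erase_insert hB', h]
    · rw [Finset.disjoint_left]
      intro A hA hB
      simp only [mem_image, mem_powersetCard] at hA hB
      obtain ⟨B, _, rfl⟩ := hB
      exact ha (hA.1 (Finset.mem_insert_self _ _))

lemma aux_amgm (n : ℕ) (z : Fin n → ℝ) (hz : ∀ i, 0 < z i) (h : ∏ i, z i = 1) :
    (n : ℝ) ≤ ∑ i, z i := by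
  have h1 : ∑ i, Real.log (z i) = 0 := by
    rw [← Real.log_prod (fun i _ => (hz i).ne'), h, Real.log_one]
  have h2 : ∑ i, Real.log (z i) ≤ ∑ i, (z i - 1) :=
    Finset.sum_le_sum fun i _ => Real.log_le_sub_one_of_pos (hz i)
  rw [Finset.sum_sub_distrib, h1] at h2
  simp at h2
  linarith

/-- Taking roots. -/
lemma aux_root (p c s m k : ℝ) (hp : 0 ≤ p) (hc : 0 ≤ c) (hs : 0 ≤ s) (hm : 0 < m)
    (h : p ^ m ≤ c ^ (k / 2) * s) : p ≤ c ^ (k / (2 * m)) * s ^ (1 / m) := by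
  have h1 := Real.rpow_le_rpow (Real.rpow_nonneg hp m) h (by positivity : 0 ≤ 1 / m)
  rw [← Real.rpow_mul hp, Real.mul_rpow (by positivity) hs, ← Real.rpow_mul hc,
    mul_one_div_cancel hm.ne', Real.rpow_one] at h1
  convert h1 using 3
  field_simp

theorem sn_step_bound (n : ℕ) (hn : 3 ≤ n) (y : Fin n → ℝ) :
    |smean n n y| ^ ((1 : ℝ) / n) ≤
      max ((2 * (n : ℝ)) ^ ((1 : ℝ) / (2 * ((n : ℝ) - 1))) * |smean n (n - 1) y| ^ ((1 : ℝ) / ((n : ℝ) - 1)))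
        ((2 * (n : ℝ)) ^ ((2 : ℝ) / (2 * ((n : ℝ) - 2))) * |smean n (n - 2) y| ^ ((1 : ℝ) / ((n : ℝ) - 2))) := by
  have hn3 : (3 : ℝ) ≤ n := by exact_mod_cast hn
  have hsn : smean n n y = ∏ i, y i := by
    have : powersetCard n (univ : Finset (Fin n)) = {univ} := by
      have h := Finset.powersetCard_self (univ : Finset (Fin n))
      rwa [Finset.card_univ, Fintype.card_fin] at h
    simp [smean, esymmS, this]
  rw [hsn]
  by_cases hP : ∏ i, y i = 0
  · rw [hP, abs_zero, Real.zero_rpow (by positivity)]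
    exact le_max_of_le_left (by positivity)
  have hy : ∀ i, y i ≠ 0 := fun i => Finset.prod_ne_zero_iff.1 hP i (mem_univ i)
  set P := ∏ i, y i with hPdef
  have hPpos : 0 < |P| := abs_pos.2 hP
  set p := |P| ^ ((1 : ℝ) / n) with hpdef
  have hp : 0 < p := Real.rpow_pos_of_pos hPpos _
  have hpn : p ^ n = |P| := by
    rw [hpdef, ← Real.rpow_natCast, ← Real.rpow_mul hPpos.le, one_div_mul_cancel (by positivity),
      Real.rpow_one]
  have hAM : (n : ℝ) ≤ ∑ i, (p * (y i)⁻¹) ^ 2 := by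
    refine aux_amgm n _ (fun i => by have := hy i; positivity) ?_
    rw [Finset.prod_pow, Finset.prod_mul_distrib, Finset.prod_const, Finset.prod_inv_distrib,
      Finset.card_univ, Fintype.card_fin, hpn, mul_pow, sq_abs, ← mul_pow, mul_inv_cancel₀ hP, one_pow]
  have hsq := aux_sq (fun i => (y i)⁻¹) univ
  have h1 := aux_compl n 1 (by omega) y hy
  have h2 := aux_compl n 2 (by omega) y hy
  have he1 : esymmS n 1 (fun i => (y i)⁻¹) = ∑ i, (y i)⁻¹ := by
    simp [esymmS, Finset.powersetCard_one]
  have he2 : esymmS n 2 (fun i => (y i)⁻¹)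
    = ∑ A ∈ powersetCard 2 (univ : Finset (Fin n)), ∏ i ∈ A, (y i)⁻¹ := rfl
  rw [← he1, ← he2] at hsq
  set e1 := esymmS n 1 (fun i => (y i)⁻¹)
  set e2 := esymmS n 2 (fun i => (y i)⁻¹)
  have hs1 : |smean n (n - 1) y| = p ^ n * (|e1| / n) := by
    rw [smean, h1, Nat.choose_symm (by omega : 1 ≤ n), Nat.choose_one_right, ← hPdef, abs_div, abs_mul,
      hpn, Nat.abs_cast, mul_div_assoc]
  have hs2 : |smean n (n - 2) y| = p ^ n * (|e2| / (n * (n - 1) / 2)) := by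
    rw [smean, h2, Nat.choose_symm (by omega : 2 ≤ n), Nat.cast_choose_two, ← hPdef, abs_div, abs_mul,
      hpn, abs_of_pos (a := (n : ℝ) * (n - 1) / 2) (by apply div_pos (mul_pos _ _) <;> linarith),
      mul_div_assoc]
  have hAM' : (n : ℝ) ≤ (p * |e1|) ^ 2 + 2 * (p ^ 2 * |e2|) := by
    simp only [mul_pow, ← Finset.mul_sum] at hAM
    have : ∑ i, (y i)⁻¹ ^ 2 ≤ |e1| ^ 2 + 2 * |e2| := by
      rw [sq_abs]; linarith [neg_abs_le e2]
    calc (n : ℝ) ≤ _ := hAM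
      _ ≤ p ^ 2 * (|e1| ^ 2 + 2 * |e2|) := by gcongr
      _ = _ := by ring
  have hpm1 : p ^ ((n : ℝ) - 1) * p = p ^ n := by
    rw [Real.rpow_sub_one hp.ne', Real.rpow_natCast, div_mul_cancel₀ _ hp.ne']
  have hpm2 : p ^ ((n : ℝ) - 2) * p ^ 2 = p ^ n := by
    rw [Real.rpow_sub hp, Real.rpow_natCast, Real.rpow_two, div_mul_cancel₀ _ (by positivity)]
  rw [le_max_iff]
  by_cases hc : (n : ℝ) ≤ 2 * (p * |e1|) ^ 2
  · left
    refine aux_root p _ _ _ 1 hp.le (by positivity) (abs_nonneg _) (by linarith) ?_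
    rw [hs1, ← hpm1, ← Real.sqrt_eq_rpow]
    have : 1 ≤ √(2 * n) * (p * |e1| / n) := by
      rw [← abs_of_nonneg (show 0 ≤ √(2 * n) * (p * |e1| / n) by positivity), ← one_le_sq_iff_one_le_abs,
        mul_pow, Real.sq_sqrt (by positivity), div_pow, mul_div_assoc', le_div_iff₀ (by positivity)]
      nlinarith
    calc p ^ ((n : ℝ) - 1) ≤ p ^ ((n : ℝ) - 1) * (√(2 * n) * (p * |e1| / n)) :=
          le_mul_of_one_le_right (by positivity) this
      _ = _ := by ring
  · right
    have hc2 : (n : ℝ) ≤ 4 * (p ^ 2 * |e2|) := by linarith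
    refine aux_root p _ _ _ 2 hp.le (by positivity) (abs_nonneg _) (by linarith) ?_
    rw [hs2, ← hpm2, div_self (two_ne_zero), Real.rpow_one]
    have hn1 : (0 : ℝ) < n - 1 := by linarith
    have : 1 ≤ 2 * n * (p ^ 2 * |e2| / (n * (n - 1) / 2)) := by
      rw [mul_div_assoc', le_div_iff₀ (by positivity)]
      nlinarith
    calc p ^ ((n : ℝ) - 2) ≤ p ^ ((n : ℝ) - 2) * (2 * n * (p ^ 2 * |e2| / (n * (n - 1) / 2))) :=
          le_mul_of_one_le_right (by positivity) this
      _ = _ := by ring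
end
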